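/- Let $K$ be an algebraically closed field, $\Gamma$ a Brauer tree of multiplicity one (a finite tree with a cyclic ordering of the edges at each vertex), and $A=KQ_\Gamma/I$ its basic Brauer tree algebra: the vertices of $Q_\Gamma$ are the edges of $\Gamma$; for each vertex $x$ of $\Gamma$ and each edge $i$ at $x$ there is an arrow from $i$ to the edge following $i$ at $x$ (a formal loop if $x$ is a leaf); $I$ is generated by the products of two arrows belonging to different vertices of $\Gamma$ and by the differences of the two full cycles starting at the same vertex of $Q_\Gamma$. Paths are multiplied in the order in which they are passed. The $A$-cycles of $A$ are the oriented cycles of $Q_\Gamma$ given by the vertices of $\Gamma$; each vertex of $Q_\Gamma$ lies on exactly two of them. Let $K^b(A)$ be the bounded homotopy category of finitely generated projective left $A$-modules, and let $T$ be a basic tilting complex over $A$ concentrated in degrees $0$ and $1$. A diagram is a connected path in $Q_\Gamma$ without self-intersections, consisting of more than one vertex, which changes its orientation exactly when it changes its $A$-cycle; its marked vertices are its two end points and the vertices at which it changes $A$-cycle. They are alternately sources and sinks, and those which are end points of the diagram are said to be of degree one. The complex of the diagram is $\bigoplus_{i\text{ source}}Ae_i\to\bigoplus_{j\text{ sink}}Ae_j$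 in degrees $0$ and $1$, whose components are right multiplications by the directed subpaths of the diagram from sources to neighbouring sinks. The algebra $\mathrm{End}_{K^b(A)}(T)$ (with the product $fg$ meaning $f$ followed by $g$) is the Brauer tree algebra with multiplicity one of a Brauer tree $\Gamma'$, whose edges correspond to the indecomposable summands of $T$ by means of the primitive idempotents. Let $\Upsilon$ be an $A$-cycle of $A$ and let $\Psi$ be an $A$-cycle of $\mathrm{End}_{K^b(A)}(T)$, that is, a vertex of $\Gamma'$, corresponding to the sources on $\Upsilon$: the edges incident to $\Psi$ are exactly the indecomposable summands of $T$ which are isomorphic either to the complex of a diagram having a degree-one source on $\Upsilon$ and no other vertex on $\Upsilon$, or to the stalk complex in degree $0$ of $Ae_i$ for a vertex $i$ on $\Upsilon$. To such a summand associate the sequence of the marked vertices of its diagram, in their order on the diagram starting from the degree-one source on $\Upsilon$; for the stalk complex of $Ae_i$ the sequence is $(i)$. Fix a vertex of $\Upsilon$ and order the vertices of $\Upsilon$ linearly so that the fixed vertex is the greatest and the vertices become smaller when one follows the arrows from it. Compare the sequences lexicographically: first vertices are compared in this linear order; if the first $p\ge 1$ vertices of two sequences coincide, the $(p+1)$-st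 vertices lie on the other $A$-cycle through the common $p$-th vertex (the one on which the $p$-th vertices were not compared) and are compared there in the linear order for which the $p$-th vertex is the greatest and the vertices become smaller when one follows the arrows from it; an empty spot at an even position is less, and an empty spot at an odd position is greater, than every vertex. Then this is a strict linear order on the edges of $\Gamma'$ incident to $\Psi$, and the cyclic ordering of these edges in $\Gamma'$ coincides with the cyclic ordering glued from it: the edge following a given edge is the greatest one among those less than it, and the edge following the least edge is the greatest edge. -/

import Mathlib

open CategoryTheory

universe u v w

/-- A Brauer tree (of multiplicity one): a finite tree together with a cyclic ordering of the
edges incident to each vertex.  A dart `d` is a half-edge: the edge `{d.fst, d.snd}` regarded as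
one of the edges incident to `d.fst`; `d.symm` is the same edge at its other end.
The permutation `rot` sends a half-edge at a vertex to the one that follows it in the cyclic
ordering at that vertex. -/
structure BrauerTree (V : Type v) where
  finite : Finite V
  graph : SimpleGraph V
  isTree : graph.IsTree
  rot : Equiv.Perm graph.Dart
  rot_fst : ∀ d, (rot d).fst = d.fst
  rot_sameCycle : ∀ d d' : graph.Dart, d.fst = d'.fst → rot.SameCycle d d'

namespace BrauerTree

variable {V : Type v} (Γ : BrauerTree V)

/-- Edges of the tree, that is, vertices of the Brauer quiver. -/
abbrev Edge : Type v := Γ.graph.edgeSet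

/-- Half-edges of the tree. -/
abbrev Dart : Type v := Γ.graph.Dart

/-- The edge underlying a half-edge. -/
def edge (d : Γ.Dart) : Γ.Edge := ⟨d.edge, d.edge_mem⟩

/-- The number of edges incident to a vertex `x` of the tree, that is, the length of the cycle
of the Brauer quiver given by `x`. -/
noncomputable def valency (x : V) : ℕ := (Γ.graph.neighborSet x).ncard

/-- The number of arrows on the directed path from `d` to `d'` along the cycle of the Brauer
quiver that contains both (for half-edges `d`, `d'` at the same vertex of the tree). -/
noncomputable def steps (d d' : Γ.Dart) : ℕ := sInf {k : ℕ | (Γ.rot)^[k] d = d'}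

/-! ### The Brauer tree algebra -/

/-- Generators of the algebra: the trivial paths of the Brauer quiver (one for each edge of the
tree) and its arrows (one for each half-edge `d`, from the edge of `d` to the edge of `rot d`).
The cycles of the quiver are the vertices `x` of the tree: the arrows of the cycle `x` are the
half-edges `d` with `d.fst = x` (for a leaf `x` this is the formal loop). -/
inductive Gen : Type v
  | idem (e : Γ.Edge) : Gen
  | arrow (d : Γ.Dart) : Gen

variable (K : Type u) [Field K]

/-- The product `d, rot d, rot² d, …` of `k` consecutive arrows of one cycle, starting with the
arrow of `d`; products of arrows are written in the order in which they are passed. -/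
def freePath : Γ.Dart → ℕ → FreeAlgebra K Γ.Gen
  | d, 0 => FreeAlgebra.ι K (Gen.idem (Γ.edge d))
  | d, k + 1 => FreeAlgebra.ι K (Gen.arrow d) * freePath (Γ.rot d) k

/-- Defining relations of the basic Brauer tree algebra of multiplicity one.  The first five
present the path algebra of the Brauer quiver; the last two are the Brauer relations:
the product of two arrows of different cycles is zero, and the two full cycles that start at
the same vertex of the quiver are equal. -/
inductive Rel : FreeAlgebra K Γ.Gen → FreeAlgebra K Γ.Gen → Prop
  | idem_mul_self (e : Γ.Edge) :
      Rel (FreeAlgebra.ι K (Gen.idem e) * FreeAlgebra.ι K (Gen.idem e))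
        (FreeAlgebra.ι K (Gen.idem e))
  | idem_mul_idem (e f : Γ.Edge) (h : e ≠ f) :
      Rel (FreeAlgebra.ι K (Gen.idem e) * FreeAlgebra.ι K (Gen.idem f)) 0
  | sum_idem : Rel (∑ᶠ e : Γ.Edge, FreeAlgebra.ι K (Gen.idem e)) 1
  | source (d : Γ.Dart) :
      Rel (FreeAlgebra.ι K (Gen.idem (Γ.edge d)) * FreeAlgebra.ι K (Gen.arrow d))
        (FreeAlgebra.ι K (Gen.arrow d))
  | target (d : Γ.Dart) :
      Rel (FreeAlgebra.ι K (Gen.arrow d) * FreeAlgebra.ι K (Gen.idem (Γ.edge (Γ.rot d))))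
        (FreeAlgebra.ι K (Gen.arrow d))
  | change_cycle (d : Γ.Dart) :
      Rel (FreeAlgebra.ι K (Gen.arrow d) * FreeAlgebra.ι K (Gen.arrow (Γ.rot d).symm)) 0
  | full_cycle (d : Γ.Dart) :
      Rel (Γ.freePath K d (Γ.valency d.fst)) (Γ.freePath K d.symm (Γ.valency d.snd))

/-- The basic Brauer tree algebra of `Γ` over `K`, with multiplicity one. -/
def Alg : Type (max u v) := RingQuot (Γ.Rel K)

noncomputable instance : Ring (Γ.Alg K) := inferInstanceAs (Ring (RingQuot (Γ.Rel K)))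

noncomputable instance : Algebra K (Γ.Alg K) :=
  inferInstanceAs (Algebra K (RingQuot (Γ.Rel K)))

/-- The element of the Brauer tree algebra given by an element of the free algebra. -/
noncomputable def ofFree : FreeAlgebra K Γ.Gen →ₐ[K] Γ.Alg K := RingQuot.mkAlgHom K (Γ.Rel K)

/-- The primitive idempotent of an edge. -/
noncomputable def idem (e : Γ.Edge) : Γ.Alg K :=
  Γ.ofFree K (FreeAlgebra.ι K (Gen.idem e))

/-- The shortest path from `d` to `d'` along the cycle of the quiver containing both (for
half-edges `d`, `d'` at the same vertex of the tree), as an element of the algebra. -/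
noncomputable def arc (d d' : Γ.Dart) : Γ.Alg K :=
  Γ.ofFree K (Γ.freePath K d (Γ.steps d d'))

/-- The indecomposable projective left module `A e`. -/
noncomputable abbrev proj (e : Γ.Edge) : Ideal (Γ.Alg K) := Ideal.span {Γ.idem K e}

/-- The homomorphism `A e → A f` given by right multiplication by `a` (more precisely by the
component `a f` of `a`, which is `a` itself if `a` is a path ending in `f`). -/
noncomputable def mulPath (e f : Γ.Edge) (a : Γ.Alg K) :
    Γ.proj K e →ₗ[Γ.Alg K] Γ.proj K f :=
  ((LinearMap.toSpanSingleton (Γ.Alg K) (Γ.Alg K) (a * Γ.idem K f)).comp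
    (Γ.proj K e).subtype).codRestrict (Γ.proj K f) fun x =>
      Ideal.mul_mem_left _ (x : Γ.Alg K)
        (Ideal.mul_mem_left _ a (Ideal.subset_span (Set.mem_singleton _)))

/-! ### Complexes -/

/-- Cochain complexes of left modules over the Brauer tree algebra. -/
abbrev Cplx := CochainComplex (ModuleCat.{max u v} (Γ.Alg K)) ℤ

/-- The homotopy category of complexes of modules; `K^b(A)` is its full subcategory on the
bounded complexes of finitely generated projective modules. -/
abbrev HoCat := HomotopyCategory (ModuleCat.{max u v} (Γ.Alg K)) (ComplexShape.up ℤ)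

variable {Γ K}

/-- A complex as an object of the homotopy category. -/
noncomputable abbrev toHo (T : Γ.Cplx K) : Γ.HoCat K :=
  (HomotopyCategory.quotient _ _).obj T

/-- All terms of the complex are finitely generated projective modules. -/
def IsFGProj (T : Γ.Cplx K) : Prop :=
  ∀ i : ℤ, Module.Finite (Γ.Alg K) (T.X i) ∧ Module.Projective (Γ.Alg K) (T.X i)

/-- A perfect complex: a bounded complex of finitely generated projective modules. -/
def IsPerfect (T : Γ.Cplx K) : Prop :=
  IsFGProj T ∧ ∃ a b : ℤ, ∀ i : ℤ, i < a ∨ b < i → Limits.IsZero (T.X i)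

/-- A two-term complex of finitely generated projective modules, in degrees `0` and `1`. -/
def IsTwoTerm (T : Γ.Cplx K) : Prop :=
  IsFGProj T ∧ ∀ i : ℤ, i ≠ 0 → i ≠ 1 → Limits.IsZero (T.X i)

/-- Tilting complexes: there are no nonzero morphisms from `T` to its nontrivial shifts, and the
thick subcategory generated by `T` contains all perfect complexes. -/
def IsTilting (T : Γ.Cplx K) : Prop :=
  IsPerfect T ∧
  (∀ i : ℤ, i ≠ 0 → ∀ f : toHo T ⟶ (toHo T)⟦i⟧, f = 0) ∧
  ∀ P : ObjectProperty (Γ.HoCat K), P.IsTriangulated → P.IsStableUnderRetracts →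
    P (toHo T) → ∀ X : Γ.Cplx K, IsPerfect X → P (toHo X)

/-- `T` is basic: it has no two isomorphic nonzero complementary direct summands, that is, if
two copies of `X` together form a direct summand of `T`, then `X` is zero. -/
def IsBasic (T : Γ.Cplx K) : Prop :=
  ∀ (X : Γ.HoCat K) (i₁ i₂ : X ⟶ toHo T) (p₁ p₂ : toHo T ⟶ X),
    i₁ ≫ p₁ = 𝟙 X → i₂ ≫ p₂ = 𝟙 X → i₁ ≫ p₂ = 0 → i₂ ≫ p₁ = 0 → Limits.IsZero X

/-- The endomorphism algebra of `T` in the homotopy category, in which the product of `f` and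
`g` is `f` followed by `g`; with this convention the endomorphism algebra of the left module
`A` is `A` itself, and a path from `i` to `j` is a morphism `A e_i → A e_j`. -/
abbrev EndAlg (T : Γ.Cplx K) := (End (toHo T))ᵐᵒᵖ

variable (K) in
/-- The stalk complex of the projective module `A e` in degree `0`. -/
noncomputable def stalk (e : Γ.Edge) : Γ.Cplx K :=
  (HomologicalComplex.single _ (ComplexShape.up ℤ) 0).obj (ModuleCat.of (Γ.Alg K) (Γ.proj K e))

/-! ### Diagrams -/

/-- The vertices of the quiver on the directed path from `d` to `d'` along the cycle containing
both, end points included. -/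
def arcVertices (d d' : Γ.Dart) : Set Γ.Edge :=
  {e | ∃ k ≤ Γ.steps d d', e = Γ.edge ((Γ.rot)^[k] d)}

/-- For a sequence of half-edges, the `k`-th string: on the cycle `(L k).snd = (L (k + 1)).fst`,
the directed path between the `k`-th and the `(k + 1)`-st marked vertex.  Vertices at even
positions are sources and vertices at odd positions are sinks, so it runs from the `k`-th to the
`(k + 1)`-st vertex if `k` is even and in the opposite direction if `k` is odd. -/
def stringVertices (L : List Γ.Dart) (k : ℕ) (hk : k + 1 < L.length) : Set Γ.Edge :=
  if Even k then arcVertices L[k].symm L[k + 1] else arcVertices L[k + 1] L[k].symm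

variable (Γ) in
/-- A diagram with a degree-one source, read from that source: a path in the quiver without
self-intersections, consisting of more than one vertex, which changes both its `A`-cycle and its
orientation at each inner marked vertex.

The marked vertices `i₀, i₁, …, i_m` are recorded, in their order on the path, as half-edges: the
path arrives at the vertex `Γ.edge d` of the quiver on the `A`-cycle `d.fst` and leaves it on the
other `A`-cycle `d.snd` through it (the first one is not arrived at, and the last one is not
left).  The path starts at a source, so `i₀, i₂, …` are sources and `i₁, i₃, …` are sinks. -/
structure SourceDiagram where
  marked : List Γ.Dart
  two_le : 2 ≤ marked.length
  /-- consecutive marked vertices are different and lie on a common `A`-cycle -/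
  chain : marked.IsChain fun d d' => d.snd = d'.fst ∧ Γ.edge d ≠ Γ.edge d'
  /-- different strings meet at most in the marked vertex at which they are joined -/
  noSelfIntersection : ∀ (k l : ℕ) (_ : k < l) (hk : k + 1 < marked.length)
    (hl : l + 1 < marked.length) (e : Γ.Edge),
    e ∈ stringVertices marked k hk → e ∈ stringVertices marked l hl →
      l = k + 1 ∧ e = Γ.edge marked[l]

/-- The vertices of the quiver, marked or not, which lie on the diagram. -/
def SourceDiagram.vertices (D : Γ.SourceDiagram) : Set Γ.Edge :=
  {e | ∃ (k : ℕ) (hk : k + 1 < D.marked.length), e ∈ stringVertices D.marked k hk}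

/-- The first vertex of the diagram, as a half-edge. -/
def SourceDiagram.first (D : Γ.SourceDiagram) : Γ.Dart :=
  D.marked[0]'(Nat.lt_of_lt_of_le Nat.zero_lt_two D.two_le)

/-- The first vertex of the diagram (a degree-one source) lies on the `A`-cycle `x`, and no other
vertex of the diagram does. -/
def SourceDiagram.StartsAt (D : Γ.SourceDiagram) (x : V) : Prop :=
  x ∈ (Γ.edge D.first : Sym2 V) ∧
    ∀ e ∈ D.vertices, x ∈ (e : Sym2 V) → e = Γ.edge D.first

/-- Positions of the sources of the diagram. -/
abbrev SourceDiagram.Src (D : Γ.SourceDiagram) := {k : Fin D.marked.length // Even k.val}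

/-- Positions of the sinks of the diagram. -/
abbrev SourceDiagram.Snk (D : Γ.SourceDiagram) := {k : Fin D.marked.length // ¬ Even k.val}

variable (K) in
/-- The path of the quiver from the source at position `k` to the sink at position `l`, if the
two are neighbours on the diagram, and zero otherwise. -/
noncomputable def SourceDiagram.entry (D : Γ.SourceDiagram) (k : D.Src) (l : D.Snk) : Γ.Alg K :=
  if l.1.val = k.1.val + 1 then Γ.arc K D.marked[k.1].symm D.marked[l.1]
  else if k.1.val = l.1.val + 1 then Γ.arc K D.marked[k.1] D.marked[l.1].symm
  else 0

variable (K) in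
/-- The differential `⨁_{sources} A e_i → ⨁_{sinks} A e_j` of the complex of the diagram. -/
noncomputable def SourceDiagram.diff (D : Γ.SourceDiagram) :
    ((k : D.Src) → Γ.proj K (Γ.edge D.marked[k.1])) →ₗ[Γ.Alg K]
      ((l : D.Snk) → Γ.proj K (Γ.edge D.marked[l.1])) :=
  LinearMap.pi fun l => ∑ k : D.Src, (Γ.mulPath K _ _ (D.entry K k l)).comp (LinearMap.proj k)

variable (K) in
/-- The two-term complex of the diagram, in degrees `0` and `1`. -/
noncomputable def SourceDiagram.complex (D : Γ.SourceDiagram) : Γ.Cplx K :=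
  HomologicalComplex.double (ModuleCat.ofHom (D.diff K))
    (show (ComplexShape.up ℤ).Rel 0 1 from zero_add 1)

/-! ### The Brauer tree of the endomorphism algebra -/

variable {V' : Type w} {Γ' : BrauerTree V'}

/-- Under an identification `φ` of the endomorphism algebra of `T` with the Brauer tree algebra
of `Γ'`, the edge `e` of `Γ'` corresponds to the direct summand `X` of `T`: `X` is the image of
the idempotent endomorphism of `T` given by `e`. -/
def SummandAt {T : Γ.Cplx K} (φ : EndAlg T ≃ₐ[K] Γ'.Alg K) (e : Γ'.Edge) (X : Γ.Cplx K) : Prop :=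
  ∃ (i : toHo X ⟶ toHo T) (p : toHo T ⟶ toHo X),
    i ≫ p = 𝟙 (toHo X) ∧ p ≫ i = (φ.symm (Γ'.idem K e)).unop

/-- The edge `e` of `Γ'` corresponds to a direct summand of `T` of source type on the `A`-cycle
`x` of `A`, with associated ordered set `L` of (marked) vertices: the summand is either the stalk
complex in degree `0` of the projective module of a vertex on `x` (and `L` consists of this
vertex), or the complex of a diagram with a degree-one source on `x` and no other vertex on `x`
(and `L` consists of its marked vertices, starting from this source). -/
def SourceSummand {T : Γ.Cplx K} (φ : EndAlg T ≃ₐ[K] Γ'.Alg K) (x : V) (e : Γ'.Edge)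
    (L : List Γ.Dart) : Prop :=
  (∃ d : Γ.Dart, d.fst = x ∧ L = [d] ∧ SummandAt φ e (stalk K (Γ.edge d))) ∨
  (∃ D : Γ.SourceDiagram, D.StartsAt x ∧ L = D.marked ∧ SummandAt φ e (D.complex K))

/-- The vertex `y` of the Brauer tree `Γ'` of the endomorphism algebra of `T` is the `A`-cycle
corresponding to the sources on the `A`-cycle `x` of `A`: the edges incident to it are exactly
those of the direct summands of source type on `x`. -/
def IsSourceCycle {T : Γ.Cplx K} (φ : EndAlg T ≃ₐ[K] Γ'.Alg K) (x : V) (y : V') : Prop :=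
  ∀ e : Γ'.Edge, y ∈ (e : Sym2 V') ↔ ∃ L, SourceSummand φ x e L

/-! ### The cyclic lexicographic order -/

variable (Γ) in
/-- Lexicographic comparison `L < L'` of ordered sets of vertices from position `p` on.  The
vertices at position `p` lie on a common `A`-cycle, on which `g` is the greatest vertex, the
vertex with an arrow coming from `g` is less than `g`, the next one is even less, and so on.  If
the vertices at position `p` coincide, then at the next position their common value is the
greatest vertex, on the other `A`-cycle through it.  An empty spot is the least one at an even
position and the greatest one at an odd position. -/
def lexLt : ℕ → Γ.Dart → List Γ.Dart → List Γ.Dart → Prop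
  | _, _, [], [] => False
  | p, _, [], _ :: _ => Even p
  | p, _, _ :: _, [] => ¬ Even p
  | p, g, a :: L, b :: L' =>
      (a = b ∧ lexLt (p + 1) a.symm L L') ∨ (a ≠ b ∧ Γ.steps g b < Γ.steps g a)

end BrauerTree

/-- `b` follows `a` in the cyclic ordering, in descending direction, glued from the linear order
`lt`: either `b` is the greatest of the elements less than `a`, or `a` is the least element and
`b` is the greatest one. -/
def GluedNext {α : Type*} (lt : α → α → Prop) (a b : α) : Prop :=
  (lt b a ∧ ∀ c, lt c a → c = b ∨ lt c b) ∨
  ((∀ c, c = a ∨ lt a c) ∧ ∀ c, c = b ∨ lt c b)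

namespace BrauerTree

section Combinatorics

variable {V : Type v} (Γ : BrauerTree V)

theorem finite_dart : Finite Γ.Dart :=
  haveI := Γ.finite
  Finite.of_injective _ (SimpleGraph.Dart.toProd_injective (G := Γ.graph))

theorem finite_edge : Finite Γ.Edge :=
  haveI := Γ.finite
  inferInstance

theorem edge_symm (d : Γ.Dart) : Γ.edge d.symm = Γ.edge d :=
  Subtype.ext d.edge_symm

theorem edge_eq_iff (d d' : Γ.Dart) : Γ.edge d = Γ.edge d' ↔ d = d' ∨ d = d'.symm := by
  rw [← SimpleGraph.dart_edge_eq_iff, edge, edge, Subtype.mk.injEq]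

/-- A half-edge at a given vertex is determined by its edge. -/
theorem eq_of_edge_eq {d d' : Γ.Dart} (h : Γ.edge d = Γ.edge d') (hx : d.fst = d'.fst) :
    d = d' := by
  rcases (Γ.edge_eq_iff d d').1 h with h | h
  · exact h
  · rw [h] at hx
    exact absurd hx d'.snd_ne_fst

/-- An edge incident to `x` is the edge of a half-edge at `x`. -/
theorem exists_dart {x : V} {e : Γ.Edge} (h : x ∈ (e : Sym2 V)) :
    ∃ d : Γ.Dart, d.fst = x ∧ Γ.edge d = e := by
  obtain ⟨z, hz⟩ := Sym2.mem_iff_exists.1 h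
  have hadj : Γ.graph.Adj x z := by
    have := e.2
    rwa [hz, SimpleGraph.mem_edgeSet] at this
  exact ⟨⟨(x, z), hadj⟩, rfl, Subtype.ext hz.symm⟩

theorem exists_dart_edge (e : Γ.Edge) : ∃ d : Γ.Dart, Γ.edge d = e := by
  obtain ⟨d, -, h⟩ := Γ.exists_dart (Sym2.out_fst_mem (e : Sym2 V))
  exact ⟨d, h⟩

theorem fst_mem_edge (d : Γ.Dart) : d.fst ∈ (Γ.edge d : Sym2 V) :=
  Sym2.mem_mk_left _ _

theorem iterate_rot_fst (k : ℕ) (d : Γ.Dart) : ((Γ.rot)^[k] d).fst = d.fst := by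
  induction k with
  | zero => rfl
  | succ k ih => rw [Function.iterate_succ_apply', Γ.rot_fst, ih]

theorem exists_iterate_rot {d d' : Γ.Dart} (h : d.fst = d'.fst) : ∃ k, (Γ.rot)^[k] d = d' := by
  have := Γ.finite_dart
  obtain ⟨k, hk⟩ := (Γ.rot_sameCycle d d' h).exists_nat_pow_eq
  exact ⟨k, by rw [← hk, Equiv.Perm.iterate_eq_pow]⟩

theorem iterate_steps {d d' : Γ.Dart} (h : d.fst = d'.fst) : (Γ.rot)^[Γ.steps d d'] d = d' :=
  Nat.sInf_mem (s := {k : ℕ | (Γ.rot)^[k] d = d'}) (Γ.exists_iterate_rot h)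

theorem mem_periodicPts (d : Γ.Dart) : d ∈ Function.periodicPts Γ.rot := by
  have := Γ.finite_dart
  exact Γ.rot.injective.mem_periodicPts d

/-- The arrows of the cycle `x` are as many as the edges incident to `x`. -/
theorem minimalPeriod_rot (d : Γ.Dart) :
    Function.minimalPeriod Γ.rot d = Γ.valency d.fst := by
  have := Γ.finite
  have hpos := Function.minimalPeriod_pos_of_mem_periodicPts (Γ.mem_periodicPts d)
  have hbij : Set.BijOn (fun k => ((Γ.rot)^[k] d).snd)
      (Set.Iio (Function.minimalPeriod Γ.rot d)) (Γ.graph.neighborSet d.fst) := by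
    refine ⟨fun k _ => ?_, fun k hk l hl hkl => ?_, fun z hz => ?_⟩
    · have := ((Γ.rot)^[k] d).adj
      rwa [Γ.iterate_rot_fst] at this
    · refine Function.iterate_injOn_Iio_minimalPeriod hk hl
        (SimpleGraph.Dart.ext _ _ (Prod.ext ?_ hkl))
      exact (Γ.iterate_rot_fst k d).trans (Γ.iterate_rot_fst l d).symm
    · obtain ⟨k, hk⟩ := Γ.exists_iterate_rot (d := d) (d' := ⟨(d.fst, z), hz⟩) rfl
      refine ⟨k % Function.minimalPeriod Γ.rot d, Nat.mod_lt _ hpos, ?_⟩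
      simp only [Function.iterate_mod_minimalPeriod_eq, hk]
  have h := hbij.injOn.ncard_image
  rw [hbij.image_eq, ← Finset.coe_Iio, Set.ncard_coe_finset, Nat.card_Iio] at h
  exact h.symm

theorem valency_pos (d : Γ.Dart) : 0 < Γ.valency d.fst := by
  rw [← minimalPeriod_rot]
  exact Function.minimalPeriod_pos_of_mem_periodicPts (Γ.mem_periodicPts d)

theorem iterate_valency (d : Γ.Dart) : (Γ.rot)^[Γ.valency d.fst] d = d := by
  rw [← minimalPeriod_rot]
  exact Function.iterate_minimalPeriod

theorem steps_le {d d' : Γ.Dart} {k : ℕ} (h : (Γ.rot)^[k] d = d') : Γ.steps d d' ≤ k :=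
  Nat.sInf_le (s := {k : ℕ | (Γ.rot)^[k] d = d'}) h

theorem steps_lt_valency {d d' : Γ.Dart} (h : d.fst = d'.fst) :
    Γ.steps d d' < Γ.valency d.fst := by
  obtain ⟨k, hk⟩ := Γ.exists_iterate_rot h
  refine (Γ.steps_le (k := k % Γ.valency d.fst) ?_).trans_lt (Nat.mod_lt _ (Γ.valency_pos d))
  rw [← minimalPeriod_rot, Function.iterate_mod_minimalPeriod_eq, hk]

theorem steps_eq_of_lt {d d' : Γ.Dart} {k : ℕ} (h : (Γ.rot)^[k] d = d')
    (hk : k < Γ.valency d.fst) : Γ.steps d d' = k := by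
  subst h
  have h' : d.fst = ((Γ.rot)^[k] d).fst := (Γ.iterate_rot_fst k d).symm
  have hlt := Γ.steps_lt_valency h'
  rw [← minimalPeriod_rot] at hk hlt
  exact Function.iterate_injOn_Iio_minimalPeriod hlt hk (Γ.iterate_steps h')

theorem steps_self (d : Γ.Dart) : Γ.steps d d = 0 :=
  Γ.steps_eq_of_lt rfl (Γ.valency_pos d)

theorem steps_pos {d d' : Γ.Dart} (h : d.fst = d'.fst) (hne : d ≠ d') : 0 < Γ.steps d d' := by
  rw [Nat.pos_iff_ne_zero]
  intro h0
  have := Γ.iterate_steps h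
  rw [h0] at this
  exact hne this

theorem steps_right_injective {g a b : Γ.Dart} (ha : g.fst = a.fst) (hb : g.fst = b.fst)
    (h : Γ.steps g a = Γ.steps g b) : a = b := by
  rw [← Γ.iterate_steps ha, h, Γ.iterate_steps hb]

/-- Passing through `a` on the way from `g` to `b`. -/
theorem steps_add_of_le {g a b : Γ.Dart} (ha : g.fst = a.fst) (hb : g.fst = b.fst)
    (h : Γ.steps g a ≤ Γ.steps g b) : Γ.steps g a + Γ.steps a b = Γ.steps g b := by
  have hk : Γ.steps a b = Γ.steps g b - Γ.steps g a := by
    refine Γ.steps_eq_of_lt ?_ ?_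
    · conv_lhs => enter [3]; rw [← Γ.iterate_steps ha]
      rw [← Function.iterate_add_apply, Nat.sub_add_cancel h, Γ.iterate_steps hb]
    · rw [← ha]
      exact (Nat.sub_le _ _).trans_lt (Γ.steps_lt_valency hb)
  omega

/-- Going around the cycle. -/
theorem steps_add_steps_swap {a b : Γ.Dart} (h : a.fst = b.fst) (hne : a ≠ b) :
    Γ.steps a b + Γ.steps b a = Γ.valency a.fst := by
  have hlt := Γ.steps_lt_valency h
  have hk : Γ.steps b a = Γ.valency a.fst - Γ.steps a b := by
    refine Γ.steps_eq_of_lt ?_ ?_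
    · conv_lhs => enter [3]; rw [← Γ.iterate_steps h]
      rw [← Function.iterate_add_apply, Nat.sub_add_cancel hlt.le, Γ.iterate_valency]
    · have := Γ.steps_pos h hne
      rw [← h]
      omega
  omega

/-- If `b` comes after `a` on the way around the cycle starting from `g`, then `b` is passed on
the way from `a` to `g`. -/
theorem steps_add_to_start {g a b : Γ.Dart} (ha : g.fst = a.fst) (hb : g.fst = b.fst)
    (hag : a ≠ g) (hbg : b ≠ g) (h : Γ.steps g a ≤ Γ.steps g b) :
    Γ.steps a b + Γ.steps b g = Γ.steps a g := by
  have h1 := Γ.steps_add_of_le ha hb h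
  have h2 := Γ.steps_add_steps_swap ha hag.symm
  have h3 := Γ.steps_add_steps_swap hb hbg.symm
  omega

end Combinatorics

end BrauerTree

namespace BrauerTree

section Algebra

variable {V : Type v} (Γ : BrauerTree V) (K : Type u) [Field K]

/-- The element of the Brauer tree algebra given by the path of `k` arrows of one cycle which
starts with the arrow of `d`. -/
noncomputable def path (d : Γ.Dart) (k : ℕ) : Γ.Alg K := Γ.ofFree K (Γ.freePath K d k)

/-- The arrow of the Brauer quiver given by a half-edge. -/
noncomputable def arrow (d : Γ.Dart) : Γ.Alg K := Γ.ofFree K (FreeAlgebra.ι K (Gen.arrow d))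

theorem arc_eq_path (d d' : Γ.Dart) : Γ.arc K d d' = Γ.path K d (Γ.steps d d') := rfl

variable {Γ K} in
theorem ofFree_eq {a b : FreeAlgebra K Γ.Gen} (h : Γ.Rel K a b) :
    Γ.ofFree K a = Γ.ofFree K b :=
  RingQuot.mkAlgHom_rel K h

theorem ofFree_surjective : Function.Surjective (Γ.ofFree K) :=
  RingQuot.mkAlgHom_surjective K (Γ.Rel K)

theorem idem_mul_self (e : Γ.Edge) : Γ.idem K e * Γ.idem K e = Γ.idem K e := by
  simpa [idem] using ofFree_eq (Rel.idem_mul_self (K := K) e)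

theorem idem_mul_idem {e f : Γ.Edge} (h : e ≠ f) : Γ.idem K e * Γ.idem K f = 0 := by
  simpa [idem] using ofFree_eq (Rel.idem_mul_idem (K := K) e f h)

theorem sum_idem [Fintype Γ.Edge] : ∑ e : Γ.Edge, Γ.idem K e = 1 := by
  simpa [idem, finsum_eq_sum_of_fintype] using ofFree_eq (Rel.sum_idem (Γ := Γ) (K := K))

theorem idem_mul_arrow (d : Γ.Dart) : Γ.idem K (Γ.edge d) * Γ.arrow K d = Γ.arrow K d := by
  simpa [idem, arrow] using ofFree_eq (Rel.source (K := K) d)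

theorem arrow_mul_idem (d : Γ.Dart) :
    Γ.arrow K d * Γ.idem K (Γ.edge (Γ.rot d)) = Γ.arrow K d := by
  simpa [idem, arrow] using ofFree_eq (Rel.target (K := K) d)

theorem arrow_mul_arrow_symm (d : Γ.Dart) : Γ.arrow K d * Γ.arrow K (Γ.rot d).symm = 0 := by
  simpa [arrow] using ofFree_eq (Rel.change_cycle (K := K) d)

theorem path_valency (d : Γ.Dart) :
    Γ.path K d (Γ.valency d.fst) = Γ.path K d.symm (Γ.valency d.snd) :=
  ofFree_eq (Rel.full_cycle (K := K) d)

theorem path_zero (d : Γ.Dart) : Γ.path K d 0 = Γ.idem K (Γ.edge d) := rfl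

theorem path_succ (d : Γ.Dart) (k : ℕ) :
    Γ.path K d (k + 1) = Γ.arrow K d * Γ.path K (Γ.rot d) k := by
  simp [path, arrow, freePath]

theorem path_one (d : Γ.Dart) : Γ.path K d 1 = Γ.arrow K d := by
  rw [path_succ, path_zero, arrow_mul_idem]

theorem idem_mul_path (d : Γ.Dart) (k : ℕ) :
    Γ.idem K (Γ.edge d) * Γ.path K d k = Γ.path K d k := by
  cases k with
  | zero => rw [path_zero, idem_mul_self]
  | succ k => rw [path_succ, ← mul_assoc, idem_mul_arrow]

theorem path_mul_path (d : Γ.Dart) (k l : ℕ) :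
    Γ.path K d k * Γ.path K ((Γ.rot)^[k] d) l = Γ.path K d (k + l) := by
  induction k generalizing d with
  | zero => rw [path_zero, zero_add]; exact Γ.idem_mul_path K d l
  | succ k ih =>
    rw [path_succ, mul_assoc, Function.iterate_succ_apply, ih, Nat.add_right_comm, path_succ]

theorem path_mul_idem (d : Γ.Dart) (k : ℕ) :
    Γ.path K d k * Γ.idem K (Γ.edge ((Γ.rot)^[k] d)) = Γ.path K d k :=
  Γ.path_mul_path K d k 0

/-- A product of two nontrivial paths on different cycles is zero. -/
theorem path_mul_path_symm {d d' : Γ.Dart} {k l : ℕ} (hk : 0 < k) (hl : 0 < l)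
    (h : d' = ((Γ.rot)^[k] d).symm) : Γ.path K d k * Γ.path K d' l = 0 := by
  obtain ⟨k, rfl⟩ := Nat.exists_eq_succ_of_ne_zero hk.ne'
  obtain ⟨l, rfl⟩ := Nat.exists_eq_succ_of_ne_zero hl.ne'
  rw [Nat.succ_eq_add_one, ← path_mul_path, path_one, Nat.succ_eq_add_one, path_succ, mul_assoc,
    ← mul_assoc (Γ.arrow K _), h, Nat.succ_eq_add_one, Function.iterate_succ_apply',
    arrow_mul_arrow_symm, zero_mul, mul_zero]

/-- A path longer than the cycle which contains it is zero. -/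
theorem path_eq_zero {d : Γ.Dart} {k : ℕ} (hk : Γ.valency d.fst < k) : Γ.path K d k = 0 := by
  obtain ⟨l, rfl⟩ := Nat.exists_eq_add_of_lt hk
  have h := Γ.path_mul_path K d (Γ.valency d.fst) (l + 1)
  rw [Γ.iterate_valency, path_valency] at h
  rw [add_assoc, ← h]
  refine Γ.path_mul_path_symm K (Γ.valency_pos d.symm) l.succ_pos ?_
  have := Γ.iterate_valency d.symm
  rw [show d.snd = d.symm.fst from rfl, this, SimpleGraph.Dart.symm_symm]

theorem arc_self (d : Γ.Dart) : Γ.arc K d d = Γ.idem K (Γ.edge d) := by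
  rw [arc_eq_path, steps_self, path_zero]

theorem idem_mul_arc (d d' : Γ.Dart) : Γ.idem K (Γ.edge d) * Γ.arc K d d' = Γ.arc K d d' :=
  Γ.idem_mul_path K d _

theorem arc_mul_idem {d d' : Γ.Dart} (h : d.fst = d'.fst) :
    Γ.arc K d d' * Γ.idem K (Γ.edge d') = Γ.arc K d d' := by
  have := Γ.path_mul_idem K d (Γ.steps d d')
  rwa [Γ.iterate_steps h] at this

theorem arc_mul_arc {a b c : Γ.Dart} (hab : a.fst = b.fst)
    (h : Γ.steps a b + Γ.steps b c = Γ.steps a c) :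
    Γ.arc K a b * Γ.arc K b c = Γ.arc K a c := by
  have := Γ.path_mul_path K a (Γ.steps a b) (Γ.steps b c)
  rwa [Γ.iterate_steps hab, h] at this

theorem arc_mul_arc_symm {a b c : Γ.Dart} (hab : a.fst = b.fst) (hbc : b.snd = c.fst)
    (hne : a ≠ b) (hne' : b.symm ≠ c) : Γ.arc K a b * Γ.arc K b.symm c = 0 :=
  Γ.path_mul_path_symm K (Γ.steps_pos hab hne) (Γ.steps_pos (d := b.symm) hbc hne')
    (by rw [Γ.iterate_steps hab])

/-! ### Spanning by paths -/

theorem idem_mul_path_mem (e : Γ.Edge) (d : Γ.Dart) (k : ℕ) :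
    Γ.idem K e * Γ.path K d k ∈
      Submodule.span K (Set.range fun q : Γ.Dart × ℕ => Γ.path K q.1 q.2) := by
  by_cases h : e = Γ.edge d
  · rw [h, idem_mul_path]
    exact Submodule.subset_span ⟨(d, k), rfl⟩
  · rw [← idem_mul_path, ← mul_assoc, Γ.idem_mul_idem K h, zero_mul]
    exact zero_mem _

theorem arrow_mul_path_mem (d' d : Γ.Dart) (k : ℕ) :
    Γ.arrow K d' * Γ.path K d k ∈
      Submodule.span K (Set.range fun q : Γ.Dart × ℕ => Γ.path K q.1 q.2) := by
  by_cases h : Γ.edge (Γ.rot d') = Γ.edge d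
  · rcases (Γ.edge_eq_iff _ _).1 h with h' | h'
    · rw [← h', ← path_succ]
      exact Submodule.subset_span ⟨(d', k + 1), rfl⟩
    · cases k with
      | zero =>
        rw [path_zero, ← h, arrow_mul_idem, ← path_one]
        exact Submodule.subset_span ⟨(d', 1), rfl⟩
      | succ k =>
        have : d = (Γ.rot d').symm := by rw [h', SimpleGraph.Dart.symm_symm]
        rw [path_succ, ← mul_assoc, this, arrow_mul_arrow_symm, zero_mul]
        exact zero_mem _
  · rw [← arrow_mul_idem, ← idem_mul_path, ← mul_assoc, mul_assoc (Γ.arrow K d'),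
      Γ.idem_mul_idem K h, mul_zero, zero_mul]
    exact zero_mem _

theorem span_path :
    Submodule.span K (Set.range fun q : Γ.Dart × ℕ => Γ.path K q.1 q.2) = ⊤ := by
  set S := Submodule.span K (Set.range fun q : Γ.Dart × ℕ => Γ.path K q.1 q.2) with hS
  have hmul : ∀ a : FreeAlgebra K Γ.Gen, ∀ s ∈ S, Γ.ofFree K a * s ∈ S := by
    intro a
    induction a using FreeAlgebra.induction with
    | grade0 r =>
      intro s hs
      rw [AlgHom.commutes, ← Algebra.smul_def]
      exact S.smul_mem r hs
    | grade1 q =>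
      intro s hs
      have hle : S ≤ S.comap (LinearMap.mulLeft K (Γ.ofFree K (FreeAlgebra.ι K q))) := by
        rw [hS, Submodule.span_le]
        rintro _ ⟨⟨d, k⟩, rfl⟩
        cases q with
        | idem e => exact Γ.idem_mul_path_mem K e d k
        | arrow d' => exact Γ.arrow_mul_path_mem K d' d k
      exact hle hs
    | mul a b ha hb =>
      intro s hs
      rw [map_mul, mul_assoc]
      exact ha _ (hb s hs)
    | add a b ha hb =>
      intro s hs
      rw [map_add, add_mul]
      exact S.add_mem (ha s hs) (hb s hs)
  have hone : (1 : Γ.Alg K) ∈ S := by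
    have := Γ.finite_edge
    have := Fintype.ofFinite Γ.Edge
    rw [← sum_idem]
    refine S.sum_mem fun e _ => ?_
    obtain ⟨d, rfl⟩ := Γ.exists_dart_edge e
    exact Submodule.subset_span ⟨(d, 0), rfl⟩
  refine eq_top_iff.2 fun a _ => ?_
  obtain ⟨b, rfl⟩ := Γ.ofFree_surjective K a
  simpa using hmul b 1 hone

/-- For different edges at one vertex, the elements of the algebra from the first one to the
second one are the multiples of the arc. -/
theorem idem_mul_mul_idem_mem {a b : Γ.Dart} (hab : a.fst = b.fst) (hne : a ≠ b) (s : Γ.Alg K) :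
    ∃ r : K, Γ.idem K (Γ.edge a) * s * Γ.idem K (Γ.edge b) = r • Γ.arc K a b := by
  have hle : (⊤ : Submodule K (Γ.Alg K)) ≤ (Submodule.span K {Γ.arc K a b}).comap
      ((LinearMap.mulRight K (Γ.idem K (Γ.edge b))).comp
        (LinearMap.mulLeft K (Γ.idem K (Γ.edge a)))) := by
    rw [← span_path, Submodule.span_le]
    rintro _ ⟨⟨d, k⟩, rfl⟩
    simp only [SetLike.mem_coe, Submodule.mem_comap, LinearMap.comp_apply,
      LinearMap.mulLeft_apply, LinearMap.mulRight_apply]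
    by_cases hd : Γ.edge a = Γ.edge d
    swap
    · rw [← idem_mul_path, ← mul_assoc, Γ.idem_mul_idem K hd, zero_mul, zero_mul]
      exact zero_mem _
    by_cases hk : Γ.edge ((Γ.rot)^[k] d) = Γ.edge b
    swap
    · rw [← path_mul_idem, mul_assoc, mul_assoc, Γ.idem_mul_idem K hk, mul_zero, mul_zero]
      exact zero_mem _
    rw [hd, idem_mul_path, ← hk, path_mul_idem]
    have hda : d = a := by
      rcases (Γ.edge_eq_iff _ _).1 hd with h | h
      · exact h.symm
      · refine absurd ?_ hne
        have h2 : ((Γ.rot)^[k] d).fst = a.snd := by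
          rw [Γ.iterate_rot_fst, h]; rfl
        rcases (Γ.edge_eq_iff _ _).1 hk with h1 | h1
        · rw [h1, ← hab] at h2
          exact absurd h2 a.fst_ne_snd
        · rw [h1] at h2
          exact SimpleGraph.Dart.ext _ _ (Prod.ext hab h2.symm)
    subst hda
    have hkb : (Γ.rot)^[k] d = b :=
      Γ.eq_of_edge_eq hk ((Γ.iterate_rot_fst k d).trans hab)
    by_cases hlt : k < Γ.valency d.fst
    · rw [arc_eq_path, Γ.steps_eq_of_lt hkb hlt]
      exact Submodule.mem_span_singleton_self _
    · rw [Γ.path_eq_zero K]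
      · exact zero_mem _
      · refine lt_of_le_of_ne (not_lt.1 hlt) fun h => hne ?_
        rw [← hkb, ← h, Γ.iterate_valency]
  obtain ⟨r, hr⟩ := Submodule.mem_span_singleton.1 (hle (Submodule.mem_top (x := s)))
  exact ⟨r, hr.symm⟩

/-- If a product of elements from `a` to `b` and from `b` to `c` does not vanish, then `b` lies
between `a` and `c` on their common cycle. -/
theorem steps_add_of_mul_ne_zero {a b c : Γ.Dart} (hab : a.fst = b.fst) (hbc : b.fst = c.fst)
    (hne : a ≠ b) (hne' : b ≠ c) (hac : a ≠ c) (s t : Γ.Alg K)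
    (h : (Γ.idem K (Γ.edge a) * s * Γ.idem K (Γ.edge b)) *
      (Γ.idem K (Γ.edge b) * t * Γ.idem K (Γ.edge c)) ≠ 0) :
    Γ.steps a b + Γ.steps b c = Γ.steps a c := by
  obtain ⟨r, hr⟩ := Γ.idem_mul_mul_idem_mem K hab hne s
  obtain ⟨r', hr'⟩ := Γ.idem_mul_mul_idem_mem K hbc hne' t
  rw [hr, hr'] at h
  have hsum : (Γ.rot)^[Γ.steps a b + Γ.steps b c] a = c := by
    rw [add_comm, Function.iterate_add_apply, Γ.iterate_steps hab, Γ.iterate_steps hbc]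
  have harc : Γ.arc K a b * Γ.arc K b c = Γ.path K a (Γ.steps a b + Γ.steps b c) := by
    have := Γ.path_mul_path K a (Γ.steps a b) (Γ.steps b c)
    rwa [Γ.iterate_steps hab] at this
  refine (Γ.steps_eq_of_lt hsum ?_).symm
  by_contra hlt
  refine h ?_
  rw [smul_mul_smul_comm, harc, Γ.path_eq_zero K, smul_zero]
  refine lt_of_le_of_ne (not_lt.1 hlt) fun h => hac ?_
  rw [← hsum, ← h, Γ.iterate_valency]

/-! ### Representations -/

section Lift

variable {R : Type*} [Ring R] [Algebra K R] (ε : Γ.Edge → R) (α : Γ.Dart → R)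

/-- The homomorphism from the free algebra with given values on the generators. -/
noncomputable def freeLift : FreeAlgebra K Γ.Gen →ₐ[K] R :=
  FreeAlgebra.lift K (Gen.rec ε α)

theorem freeLift_idem (e : Γ.Edge) :
    Γ.freeLift K ε α (FreeAlgebra.ι K (Gen.idem e)) = ε e := by
  simp [freeLift]

theorem freeLift_arrow (d : Γ.Dart) :
    Γ.freeLift K ε α (FreeAlgebra.ι K (Gen.arrow d)) = α d := by
  simp [freeLift]

/-- A homomorphism from a Brauer tree algebra which vanishes on all full cycles. -/
theorem exists_lift [Fintype Γ.Edge] (h1 : ∀ e, ε e * ε e = ε e)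
    (h2 : ∀ e f, e ≠ f → ε e * ε f = 0) (h3 : ∑ e, ε e = 1)
    (h4 : ∀ d, ε (Γ.edge d) * α d = α d) (h5 : ∀ d, α d * ε (Γ.edge (Γ.rot d)) = α d)
    (h6 : ∀ d, α d * α (Γ.rot d).symm = 0)
    (h7 : ∀ d, Γ.freeLift K ε α (Γ.freePath K d (Γ.valency d.fst)) = 0) :
    ∃ ρ : Γ.Alg K →ₐ[K] R, ∀ a, ρ (Γ.ofFree K a) = Γ.freeLift K ε α a := by
  refine ⟨RingQuot.liftAlgHom K ⟨Γ.freeLift K ε α, ?_⟩,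
    fun a => RingQuot.liftAlgHom_mkAlgHom_apply K _ _ a⟩
  intro a b hab
  cases hab with
  | idem_mul_self e => simp [freeLift_idem, h1]
  | idem_mul_idem e f h => simp [freeLift_idem, h2 e f h]
  | sum_idem => simp [finsum_eq_sum_of_fintype, freeLift_idem, h3]
  | source d => simp [freeLift_idem, freeLift_arrow, h4]
  | target d => simp [freeLift_idem, freeLift_arrow, h5]
  | change_cycle d => simp [freeLift_arrow, h6]
  | full_cycle d => rw [h7]; exact (h7 d.symm).symm

end Lift

/-- The idempotents of different edges are not equivalent. -/
theorem idem_ne_mul_of_ne {e f : Γ.Edge} (h : e ≠ f) {s t : Γ.Alg K}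
    (hs : s * Γ.idem K f = s) : Γ.idem K e ≠ s * t := by
  classical
  have := Γ.finite_edge
  have := Fintype.ofFinite Γ.Edge
  obtain ⟨ρ, hρ⟩ := Γ.exists_lift K (R := K) (fun e' => if e' = e then 1 else 0) (fun _ => 0)
    (fun _ => by simp) (fun a b hab => by
      by_cases ha : a = e
      · subst ha; simp [hab.symm]
      · simp [ha])
    (by simp) (by simp) (by simp) (by simp) (fun d => by
      obtain ⟨k, hk⟩ := Nat.exists_eq_succ_of_ne_zero (Γ.valency_pos d).ne'
      rw [hk, freePath, map_mul, freeLift_arrow, zero_mul])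
  have hid : ∀ e', ρ (Γ.idem K e') = if e' = e then 1 else 0 := fun e' => by
    rw [idem, hρ, freeLift_idem]
  intro hst
  have h0 : ρ s = 0 := by rw [← hs, map_mul, hid, if_neg h.symm, mul_zero]
  have := congrArg ρ hst
  rw [map_mul, h0, zero_mul, hid, if_pos rfl] at this
  exact one_ne_zero this

/-- The uniserial representation of the paths starting with `g` on its cycle: nontrivial paths on
the other cycle through `g` act as zero, arcs starting with `g` do not. -/
theorem exists_uniserial (g : Γ.Dart) :
    ∃ (n : Type v) (_ : Fintype n) (_ : DecidableEq n) (ρ : Γ.Alg K →ₐ[K] Matrix n n K),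
      (∀ k, 0 < k → ρ (Γ.path K g.symm k) = 0) ∧
      ∀ k, k < Γ.valency g.fst → ρ (Γ.path K g k) ≠ 0 := by
  classical
  have := Γ.finite_edge
  have := Fintype.ofFinite Γ.Edge
  let ε : Γ.Edge → Matrix Γ.Edge Γ.Edge K := fun e => Matrix.single e e 1
  let α : Γ.Dart → Matrix Γ.Edge Γ.Edge K := fun d =>
    if d.fst = g.fst ∧ Γ.rot d ≠ g then Matrix.single (Γ.edge d) (Γ.edge (Γ.rot d)) 1 else 0
  have hne : ∀ (d : Γ.Dart) k, d.fst ≠ g.fst → 0 < k →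
      Γ.freeLift K ε α (Γ.freePath K d k) = 0 := by
    intro d k hd hk
    obtain ⟨l, rfl⟩ := Nat.exists_eq_succ_of_ne_zero hk.ne'
    rw [freePath, map_mul, freeLift_arrow]
    simp only [α]
    rw [if_neg (fun h => hd h.1), zero_mul]
  have hcut : ∀ (k l : ℕ) (d : Γ.Dart), l < k → (Γ.rot)^[l + 1] d = g →
      Γ.freeLift K ε α (Γ.freePath K d k) = 0 := by
    intro k
    induction k with
    | zero => intro l d hl; exact absurd hl (Nat.not_lt_zero _)
    | succ k ih =>
      intro l d hl hd
      rw [freePath, map_mul, freeLift_arrow]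
      cases l with
      | zero =>
        simp only [α]
        rw [if_neg (fun h => h.2 hd), zero_mul]
      | succ l => rw [ih l (Γ.rot d) (by omega) hd, mul_zero]
  obtain ⟨ρ, hρ⟩ := Γ.exists_lift K ε α (fun e => by simp [ε])
    (fun e f h => by simp [ε, h]) (by
      ext i j
      rcases eq_or_ne i j with rfl | h
      · simp [ε, Matrix.sum_apply, Matrix.single_apply]
      · rw [Matrix.sum_apply, Matrix.one_apply_ne h]
        refine Finset.sum_eq_zero fun e _ => Matrix.single_apply_of_ne _ _ _ _ _ ?_
        rintro ⟨rfl, rfl⟩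
        exact h rfl)
    (fun d => by simp only [ε, α]; split_ifs <;> simp)
    (fun d => by simp only [ε, α]; split_ifs <;> simp)
    (fun d => by
      simp only [α]
      by_cases h : d.fst = g.fst
      · have : ((Γ.rot d).symm).fst ≠ g.fst := by
          rw [← h, ← Γ.rot_fst d]
          exact (Γ.rot d).snd_ne_fst
        rw [if_neg (c := _ ∧ Γ.rot (Γ.rot d).symm ≠ g) (fun h' => this h'.1), mul_zero]
      · rw [if_neg (fun h' => h h'.1), zero_mul])
    (fun d => by
      by_cases h : d.fst = g.fst
      · by_cases hdg : d = g
        · subst hdg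
          refine hcut _ (Γ.valency d.fst - 1) d (Nat.sub_lt (Γ.valency_pos d) one_pos) ?_
          rw [Nat.sub_one_add_one (Γ.valency_pos d).ne', Γ.iterate_valency]
        · have hp := Γ.steps_pos h hdg
          refine hcut _ (Γ.steps d g - 1) d ?_ ?_
          · have := Γ.steps_lt_valency h
            omega
          · rw [Nat.sub_one_add_one hp.ne', Γ.iterate_steps h]
      · exact hne d _ h (Γ.valency_pos d))
  refine ⟨Γ.Edge, inferInstance, inferInstance, ρ, fun k hk => ?_, fun k hk => ?_⟩
  · rw [path, hρ, hne _ _ g.snd_ne_fst hk]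
  · have key : ∀ l m, m + l < Γ.valency g.fst →
        Γ.freeLift K ε α (Γ.freePath K ((Γ.rot)^[m] g) l) =
          Matrix.single (Γ.edge ((Γ.rot)^[m] g)) (Γ.edge ((Γ.rot)^[m + l] g)) 1 := by
      intro l
      induction l with
      | zero => intro m _; rw [freePath, freeLift_idem, add_zero]
      | succ l ih =>
        intro m hm
        have h1 : Γ.rot ((Γ.rot)^[m] g) = (Γ.rot)^[m + 1] g :=
          (Function.iterate_succ_apply' _ _ _).symm
        have h2 : (Γ.rot)^[m + 1] g ≠ g := by
          intro h
          have h3 := Γ.steps_eq_of_lt h (by omega)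
          rw [steps_self] at h3
          omega
        rw [freePath, map_mul, freeLift_arrow, h1, ih (m + 1) (by omega)]
        simp only [α]
        rw [if_pos ⟨Γ.iterate_rot_fst m g, by rwa [h1]⟩, h1, Matrix.single_mul_single_same,
          one_mul, show m + 1 + l = m + (l + 1) by omega]
    have h := key k 0 (by omega)
    rw [path, hρ]
    intro h0
    rw [show g = (Γ.rot)^[0] g from rfl, h] at h0
    have := congrFun (congrFun h0 (Γ.edge ((Γ.rot)^[0] g))) (Γ.edge ((Γ.rot)^[0 + k] g))
    rw [Matrix.single_apply_same] at this
    exact one_ne_zero this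

end Algebra

end BrauerTree

namespace BrauerTree

section Lists

variable {V : Type v} {Γ : BrauerTree V}

variable (Γ) in
/-- Sequences of half-edges which arise from diagrams and stalk complexes: consecutive terms are
different and lie on a common cycle. -/
def IsLinked (L : List Γ.Dart) : Prop :=
  L.IsChain fun d d' => d.snd = d'.fst ∧ Γ.edge d ≠ Γ.edge d'

variable (Γ) in
/-- The first term of the sequence, if any, lies on the cycle `x`. -/
def HeadAt (x : V) (L : List Γ.Dart) : Prop := ∀ d ∈ L.head?, d.fst = x

theorem IsLinked.tail {a : Γ.Dart} {L : List Γ.Dart} (h : Γ.IsLinked (a :: L)) : Γ.IsLinked L :=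
  List.IsChain.tail h

theorem IsLinked.headAt_tail {a : Γ.Dart} {L : List Γ.Dart} (h : Γ.IsLinked (a :: L)) :
    Γ.HeadAt a.snd L := by
  cases L with
  | nil => intro d hd; simp at hd
  | cons b L =>
    rintro d hd
    obtain rfl : b = d := by simpa using hd
    exact ((List.isChain_cons_cons.1 h).1.1).symm

theorem HeadAt.fst_eq {x : V} {a : Γ.Dart} {L : List Γ.Dart} (h : Γ.HeadAt x (a :: L)) :
    a.fst = x :=
  h a (by simp)

theorem lexLt_irrefl (p : ℕ) (g : Γ.Dart) (L : List Γ.Dart) : ¬ Γ.lexLt p g L L := by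
  induction L generalizing p g with
  | nil => simp [lexLt]
  | cons a L ih => simp [lexLt, ih]

theorem lexLt_trans (p : ℕ) (g : Γ.Dart) (L L' L'' : List Γ.Dart) (h : Γ.lexLt p g L L')
    (h' : Γ.lexLt p g L' L'') : Γ.lexLt p g L L'' := by
  induction L generalizing p g L' L'' with
  | nil =>
    cases L' <;> cases L'' <;> simp_all [lexLt]
  | cons a L ih =>
    cases L' with
    | nil =>
      cases L'' with
      | nil => exact h
      | cons c L'' => exact absurd h' h
    | cons b L' =>
      cases L'' with
      | nil => simpa [lexLt] using h'
      | cons c L'' =>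
        simp only [lexLt] at h h' ⊢
        rcases h with ⟨rfl, h⟩ | ⟨hab, h⟩
        · rcases h' with ⟨rfl, h'⟩ | ⟨hac, h'⟩
          · exact Or.inl ⟨rfl, ih _ _ _ _ h h'⟩
          · exact Or.inr ⟨hac, h'⟩
        · rcases h' with ⟨rfl, -⟩ | ⟨-, h'⟩
          · exact Or.inr ⟨hab, h⟩
          · refine Or.inr ⟨?_, h'.trans h⟩
            rintro rfl
            exact lt_asymm h h'

theorem lexLt_trichotomous (p : ℕ) (g : Γ.Dart) (L L' : List Γ.Dart) (hL : Γ.IsLinked L)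
    (hL' : Γ.IsLinked L') (hg : Γ.HeadAt g.fst L) (hg' : Γ.HeadAt g.fst L') :
    Γ.lexLt p g L L' ∨ L = L' ∨ Γ.lexLt p g L' L := by
  induction L generalizing p g L' with
  | nil =>
    cases L' with
    | nil => simp
    | cons b L' => simpa [lexLt] using em (Even p)
  | cons a L ih =>
    cases L' with
    | nil => simpa [lexLt] using (em (Even p)).symm
    | cons b L' =>
      by_cases hab : a = b
      · subst hab
        rcases ih (p + 1) a.symm L' hL.tail hL'.tail hL.headAt_tail hL'.headAt_tail with
          h | h | h
        · exact Or.inl (Or.inl ⟨rfl, h⟩)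
        · exact Or.inr (Or.inl (by rw [h]))
        · exact Or.inr (Or.inr (Or.inl ⟨rfl, h⟩))
      · rcases lt_trichotomy (Γ.steps g a) (Γ.steps g b) with h | h | h
        · exact Or.inr (Or.inr (Or.inr ⟨Ne.symm hab, h⟩))
        · exact absurd (Γ.steps_right_injective hg.fst_eq.symm hg'.fst_eq.symm h) hab
        · exact Or.inl (Or.inr ⟨hab, h⟩)

theorem steps_head_le_of_lexLt {p : ℕ} {g a b : Γ.Dart} {L L' : List Γ.Dart}
    (h : Γ.lexLt p g (b :: L') (a :: L)) : Γ.steps g a ≤ Γ.steps g b := by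
  rcases h with ⟨rfl, -⟩ | ⟨-, h⟩
  · exact le_rfl
  · exact h.le

variable (K : Type u) [Field K]

/-- The path of the quiver between the terms at positions `j` and `j + 1` of a sequence, whose
first term is a source if `p` is even and a sink otherwise; zero if there are no such terms. -/
noncomputable def link : ℕ → List Γ.Dart → ℕ → Γ.Alg K
  | p, a :: b :: _, 0 => open Classical in
      if Even p then Γ.arc K a.symm b else Γ.arc K b a.symm
  | p, _ :: L, j + 1 => link (p + 1) L j
  | _, _, _ => 0

open Classical in
/-- The components of the morphism between the complexes of two sequences: the arc between the
terms at position `j`, if all the previous terms coincide, and zero otherwise. -/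
noncomputable def coef : List Γ.Dart → List Γ.Dart → ℕ → Γ.Alg K
  | a :: _, b :: _, 0 => Γ.arc K a b
  | a :: L, b :: L', j + 1 => if a = b then coef L L' j else 0
  | _, _, _ => 0

theorem link_eq (p : ℕ) (L : List Γ.Dart) (j : ℕ) (hj : j + 1 < L.length) :
    link K p L j =
      if Even (p + j) then Γ.arc K L[j].symm L[j + 1] else Γ.arc K L[j + 1] L[j].symm := by
  induction j generalizing p L with
  | zero =>
    match L, hj with
    | a :: b :: L, _ => simp [link]
  | succ j ih =>
    match L, hj with
    | a :: L, hj =>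
      simp only [List.length_cons, Nat.add_lt_add_iff_right] at hj
      rw [link, ih (p + 1) L hj]
      simp [add_assoc, add_comm 1 j]

theorem link_eq_zero (p : ℕ) (L : List Γ.Dart) (j : ℕ) (hj : L.length ≤ j + 1) :
    link K p L j = 0 := by
  induction j generalizing p L with
  | zero =>
    match L, hj with
    | [], _ => simp [link]
    | [a], _ => simp [link]
  | succ j ih =>
    match L, hj with
    | [], _ => simp [link]
    | a :: L, hj =>
      rw [link, ih _ _ (by simpa using hj)]

theorem coef_nil_left (L : List Γ.Dart) (j : ℕ) : coef K [] L j = 0 := by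
  simp [coef]

theorem coef_nil_right (L : List Γ.Dart) (j : ℕ) : coef K L [] j = 0 := by
  simp [coef]

theorem coef_eq_zero_left (L L' : List Γ.Dart) (j : ℕ) (hj : L.length ≤ j) :
    coef K L L' j = 0 := by
  induction j generalizing L L' with
  | zero =>
    obtain rfl : L = [] := by simpa using hj
    exact coef_nil_left K _ _
  | succ j ih =>
    cases L with
    | nil => exact coef_nil_left K _ _
    | cons a L =>
      cases L' with
      | nil => exact coef_nil_right K _ _
      | cons b L' => rw [coef, ih _ _ (by simpa using hj), ite_self]

theorem coef_eq_zero_right (L L' : List Γ.Dart) (j : ℕ) (hj : L'.length ≤ j) :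
    coef K L L' j = 0 := by
  induction j generalizing L L' with
  | zero =>
    obtain rfl : L' = [] := by simpa using hj
    exact coef_nil_right K _ _
  | succ j ih =>
    cases L with
    | nil => exact coef_nil_left K _ _
    | cons a L =>
      cases L' with
      | nil => exact coef_nil_right K _ _
      | cons b L' => rw [coef, ih _ _ (by simpa using hj), ite_self]

/-- The components end in the terms of the second sequence. -/
theorem coef_mul_idem (x : V) (L L' : List Γ.Dart) (hL : Γ.IsLinked L) (hL' : Γ.IsLinked L')
    (hx : Γ.HeadAt x L) (hx' : Γ.HeadAt x L') (j : ℕ) (hj : j < L'.length) :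
    coef K L L' j * Γ.idem K (Γ.edge L'[j]) = coef K L L' j := by
  induction j generalizing x L L' with
  | zero =>
    match L, L', hj with
    | [], _, _ => rw [coef_nil_left, zero_mul]
    | a :: L, b :: L', _ =>
      exact Γ.arc_mul_idem K (hx.fst_eq.trans hx'.fst_eq.symm)
  | succ j ih =>
    match L, L', hj with
    | [], _, _ => rw [coef_nil_left, zero_mul]
    | a :: L, b :: L', hj =>
      rw [coef]
      split_ifs with hab
      · subst hab
        exact ih _ L L' hL.tail hL'.tail hL.headAt_tail hL'.headAt_tail (by simpa using hj)
      · rw [zero_mul]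

/-- The components commute with the differentials. -/
theorem link_mul_coef (p : ℕ) (g : Γ.Dart) (L L' : List Γ.Dart) (hL : Γ.IsLinked L)
    (hL' : Γ.IsLinked L') (hg : Γ.HeadAt g.fst L) (hg' : Γ.HeadAt g.fst L')
    (hlt : Γ.lexLt (p + 1) g L' L) (hne : L ≠ []) (hne' : L' ≠ []) (j : ℕ) :
    (Even (p + j) → link K p L j * coef K L L' (j + 1) = coef K L L' j * link K p L' j) ∧
    (¬ Even (p + j) → link K p L j * coef K L L' j = coef K L L' (j + 1) * link K p L' j) := by
  obtain ⟨a, L, rfl⟩ := List.exists_cons_of_ne_nil hne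
  obtain ⟨b, L', rfl⟩ := List.exists_cons_of_ne_nil hne'
  induction j generalizing p g a b L L' with
  | zero =>
    have hab' : a.fst = b.fst := hg.fst_eq.trans hg'.fst_eq.symm
    have hnext : ∀ (c d : Γ.Dart) (M : List Γ.Dart), Γ.IsLinked (c :: d :: M) →
        c.snd = d.fst ∧ c.symm ≠ d := fun c d M h => by
      have := (List.isChain_cons_cons.1 h).1
      refine ⟨this.1, fun h => this.2 ?_⟩
      rw [← h, edge_symm]
    rw [add_zero]
    refine ⟨fun hp => ?_, fun hp => ?_⟩
    · by_cases hab : a = b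
      · subst hab
        replace hlt : Γ.lexLt (p + 1 + 1) a.symm L' L := by simpa [lexLt] using hlt
        match L, L' with
        | [], [] => simp [link]
        | [], b :: L' => simp [lexLt, parity_simps, hp] at hlt
        | a' :: L, [] => simp [link, coef]
        | a' :: L, b' :: L' =>
          obtain ⟨h1, h2⟩ := hnext _ _ _ hL
          obtain ⟨h3, h4⟩ := hnext _ _ _ hL'
          simp only [link, coef, if_pos hp, if_true, arc_self]
          rw [← edge_symm, idem_mul_arc, Γ.arc_mul_arc K (a := a.symm) h1]
          exact Γ.steps_add_of_le (g := a.symm) h1 h3 (steps_head_le_of_lexLt hlt)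
      · match L' with
        | [] => simp [link, coef, hab]
        | b' :: L' =>
          obtain ⟨h3, h4⟩ := hnext _ _ _ hL'
          simp only [link, coef, if_pos hp, if_neg hab, mul_zero]
          rw [Γ.arc_mul_arc_symm K hab' h3 hab h4]
    · by_cases hab : a = b
      · subst hab
        replace hlt : Γ.lexLt (p + 1 + 1) a.symm L' L := by simpa [lexLt] using hlt
        match L, L' with
        | [], [] => simp [link]
        | [], b :: L' => simp [link, coef]
        | a' :: L, [] => simp [lexLt, parity_simps, hp] at hlt
        | a' :: L, b' :: L' =>
          obtain ⟨h1, h2⟩ := hnext _ _ _ hL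
          obtain ⟨h3, h4⟩ := hnext _ _ _ hL'
          simp only [link, coef, if_neg hp, if_true, arc_self]
          rw [← edge_symm, Γ.arc_mul_idem K (d' := a.symm) h1.symm,
            Γ.arc_mul_arc K (h1.symm.trans h3)]
          exact Γ.steps_add_to_start (g := a.symm) h1 h3 h2.symm h4.symm
            (steps_head_le_of_lexLt hlt)
      · match L with
        | [] => simp [link, coef, hab]
        | a' :: L =>
          obtain ⟨h1, h2⟩ := hnext _ _ _ hL
          simp only [link, coef, if_neg hp, if_neg hab, zero_mul]
          have := Γ.arc_mul_arc_symm K (a := a') (b := a.symm) (c := b) h1.symm hab' h2.symm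
          rw [SimpleGraph.Dart.symm_symm] at this
          exact this hab
  | succ j ih =>
    have hlink : ∀ (c : Γ.Dart) (M : List Γ.Dart),
        link K p (c :: M) (j + 1) = link K (p + 1) M j := fun c M => by
      rw [link]
    rw [hlink, hlink, coef, coef]
    by_cases hab : a = b
    · subst hab
      rw [if_pos rfl, if_pos rfl, ← add_assoc, Nat.add_right_comm p j 1]
      replace hlt : Γ.lexLt (p + 1 + 1) a.symm L' L := by simpa [lexLt] using hlt
      match L, L' with
      | [], [] => simp [coef]
      | [], b :: L' =>
        simp [coef, link]
      | a' :: L, [] => simp [coef, link]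
      | a' :: L, b' :: L' =>
        exact ih (p + 1) a.symm _ _ hL.tail hL.headAt_tail (List.cons_ne_nil _ _) _ _ hL'.tail
          hL'.headAt_tail (List.cons_ne_nil _ _) hlt
    · simp [hab]

end Lists

end BrauerTree

section Double

variable {C : Type*} [Category* C] [Preadditive C] [Limits.HasZeroObject C]

/-- The morphism between complexes in degrees `0` and `1` given by a commutative square. -/
noncomputable def doubleMap {X₀ X₁ Y₀ Y₁ : C} {f : X₀ ⟶ X₁} {f' : Y₀ ⟶ Y₁}
    (h01 : (ComplexShape.up ℤ).Rel 0 1) (a : X₀ ⟶ Y₀) (b : X₁ ⟶ Y₁) (comm : a ≫ f' = f ≫ b) :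
    HomologicalComplex.double f h01 ⟶ HomologicalComplex.double f' h01 :=
  HomologicalComplex.mkHomFromDouble h01 (by decide)
    (a ≫ (HomologicalComplex.doubleXIso₀ f' h01).inv)
    (b ≫ (HomologicalComplex.doubleXIso₁ f' h01 (by decide)).inv)
    (by rw [HomologicalComplex.double_d f' h01 (by decide), Category.assoc,
      Iso.inv_hom_id_assoc, ← Category.assoc, comm, Category.assoc])
    (fun k _ => by
      rw [HomologicalComplex.double_d_eq_zero₀ _ _ _ _ (by decide), Limits.comp_zero])

theorem doubleMap_f_zero {X₀ X₁ Y₀ Y₁ : C} {f : X₀ ⟶ X₁} {f' : Y₀ ⟶ Y₁}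
    (h01 : (ComplexShape.up ℤ).Rel 0 1) (a : X₀ ⟶ Y₀) (b : X₁ ⟶ Y₁) (comm : a ≫ f' = f ≫ b) :
    (doubleMap h01 a b comm).f 0 = (HomologicalComplex.doubleXIso₀ f h01).hom ≫ a ≫
      (HomologicalComplex.doubleXIso₀ f' h01).inv :=
  HomologicalComplex.mkHomFromDouble_f₀ _ _ _ _ _ _

/-- If a composition of two such morphisms is null-homotopic, then in degree `0` it factors
through the differential. -/
theorem exists_factor_of_quotient_map_eq_zero {X₀ X₁ Y₀ Y₁ Z₀ Z₁ : C} {f : X₀ ⟶ X₁}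
    {f' : Y₀ ⟶ Y₁} {f'' : Z₀ ⟶ Z₁} (h01 : (ComplexShape.up ℤ).Rel 0 1)
    {a : X₀ ⟶ Y₀} {b : X₁ ⟶ Y₁} (comm : a ≫ f' = f ≫ b)
    {a' : Y₀ ⟶ Z₀} {b' : Y₁ ⟶ Z₁} (comm' : a' ≫ f'' = f' ≫ b')
    (h0 : (HomotopyCategory.quotient C (ComplexShape.up ℤ)).map
      (doubleMap h01 a b comm ≫ doubleMap h01 a' b' comm') = 0) :
    ∃ h : X₁ ⟶ Z₀, a ≫ a' = f ≫ h := by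
  have H := HomotopyCategory.homotopyOfEq (doubleMap h01 a b comm ≫ doubleMap h01 a' b' comm') 0
    (by rw [h0, Functor.map_zero])
  have hc := H.comm 0
  rw [dNext_eq H.hom h01, prevD_eq H.hom (show (ComplexShape.up ℤ).Rel (-1) 0 from by simp),
    HomologicalComplex.double_d_eq_zero₀ f'' h01 _ _ (by decide), Limits.comp_zero, add_zero,
    HomologicalComplex.zero_f, add_zero, HomologicalComplex.double_d f h01 (by decide),
    HomologicalComplex.comp_f, doubleMap_f_zero, doubleMap_f_zero] at hc
  refine ⟨(HomologicalComplex.doubleXIso₁ f h01 (by decide)).inv ≫ H.hom 1 0 ≫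
    (HomologicalComplex.doubleXIso₀ f'' h01).hom, ?_⟩
  rw [← cancel_epi (HomologicalComplex.doubleXIso₀ f h01).hom,
    ← cancel_mono (HomologicalComplex.doubleXIso₀ f'' h01).inv]
  simpa using hc

/-- A complex in degrees `0` and `1` whose second term is zero is a stalk complex. -/
noncomputable def doubleIsoSingle {X₀ X₁ Y : C} (f : X₀ ⟶ X₁) (h01 : (ComplexShape.up ℤ).Rel 0 1)
    (hX : Limits.IsZero X₁) (i : X₀ ≅ Y) :
    HomologicalComplex.double f h01 ≅
      (HomologicalComplex.single C (ComplexShape.up ℤ) 0).obj Y where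
  hom := HomologicalComplex.mkHomToSingle
    ((HomologicalComplex.doubleXIso₀ f h01).hom ≫ i.hom) (fun k _ => by
      rw [HomologicalComplex.double_d_eq_zero₁ f h01 _ _ (by decide), Limits.zero_comp])
  inv := HomologicalComplex.mkHomFromSingle
    (i.inv ≫ (HomologicalComplex.doubleXIso₀ f h01).inv) (fun k hk => by
      obtain rfl : k = 1 := by simpa using hk.symm
      rw [HomologicalComplex.double_d f h01 (by decide), hX.eq_of_tgt f 0]
      simp)
  hom_inv_id := by
    refine HomologicalComplex.from_double_hom_ext ?_ ?_
    · simp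
    · exact (hX.of_iso (HomologicalComplex.doubleXIso₁ f h01 (by decide))).eq_of_src _ _
  inv_hom_id := by
    apply HomologicalComplex.from_single_hom_ext
    simp

end Double

namespace BrauerTree

section Complexes

variable {V : Type v} {Γ : BrauerTree V} (K : Type u) [Field K]

theorem coe_mulPath (e f : Γ.Edge) (a : Γ.Alg K) (s : Γ.proj K e) :
    (Γ.mulPath K e f a s : Γ.Alg K) = s * (a * Γ.idem K f) := rfl

theorem idem_mem_proj (e : Γ.Edge) : Γ.idem K e ∈ Γ.proj K e :=
  Ideal.subset_span (Set.mem_singleton _)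

section Matrix

variable {ι κ μ : Type*} [Fintype ι]

/-- The homomorphism between sums of indecomposable projective modules given by a matrix. -/
noncomputable def matMap (a : ι → Γ.Edge) (b : κ → Γ.Edge) (M : ι → κ → Γ.Alg K) :
    ((k : ι) → Γ.proj K (a k)) →ₗ[Γ.Alg K] ((l : κ) → Γ.proj K (b l)) :=
  LinearMap.pi fun l => ∑ k, (Γ.mulPath K _ _ (M k l)).comp (LinearMap.proj k)

theorem coe_matMap (a : ι → Γ.Edge) (b : κ → Γ.Edge) (M : ι → κ → Γ.Alg K)
    (s : (k : ι) → Γ.proj K (a k)) (l : κ) :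
    (matMap K a b M s l : Γ.Alg K) = ∑ k, (s k : Γ.Alg K) * (M k l * Γ.idem K (b l)) := by
  simp [matMap, LinearMap.sum_apply, coe_mulPath]

theorem matMap_comp [Fintype κ] (a : ι → Γ.Edge) (b : κ → Γ.Edge) (c : μ → Γ.Edge)
    (M : ι → κ → Γ.Alg K) (N : κ → μ → Γ.Alg K) (hM : ∀ k l, M k l * Γ.idem K (b l) = M k l) :
    (matMap K b c N).comp (matMap K a b M) = matMap K a c fun k l => ∑ m, M k m * N m l := by
  refine LinearMap.ext fun s => funext fun l => Subtype.ext ?_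
  rw [LinearMap.comp_apply, coe_matMap, coe_matMap]
  simp only [coe_matMap, hM, Finset.sum_mul, Finset.mul_sum]
  rw [Finset.sum_comm]
  simp only [mul_assoc]

end Matrix

/-- Positions of the sources of a sequence. -/
abbrev ListSrc (L : List Γ.Dart) := {k : Fin L.length // Even k.val}

/-- Positions of the sinks of a sequence. -/
abbrev ListSnk (L : List Γ.Dart) := {k : Fin L.length // ¬ Even k.val}

/-- The path from the source at position `k` to the sink at position `l`, if these are
neighbours, and zero otherwise. -/
noncomputable def listEntry (L : List Γ.Dart) (k l : ℕ) : Γ.Alg K :=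
  if l = k + 1 then link K 0 L k else if k = l + 1 then link K 0 L l else 0

/-- The differential of the complex of a sequence of half-edges. -/
noncomputable def listDiff (L : List Γ.Dart) :
    ((k : ListSrc L) → Γ.proj K (Γ.edge L[k.1])) →ₗ[Γ.Alg K]
      ((l : ListSnk L) → Γ.proj K (Γ.edge L[l.1])) :=
  matMap K _ _ fun k l => listEntry K L k.1.val l.1.val

/-- The two-term complex of a sequence of half-edges. -/
noncomputable def listComplex (L : List Γ.Dart) : Γ.Cplx K :=
  HomologicalComplex.double (ModuleCat.ofHom (listDiff K L))
    (show (ComplexShape.up ℤ).Rel 0 1 from zero_add 1)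

theorem SourceDiagram.entry_eq (D : Γ.SourceDiagram) (k : D.Src) (l : D.Snk) :
    D.entry K k l = listEntry K D.marked k.1.val l.1.val := by
  rw [entry, listEntry]
  split_ifs with h1 h2
  · rw [link_eq K 0 D.marked k.1.val (h1 ▸ l.1.2), if_pos (by simpa using k.2)]
    simp [h1]
  · rw [link_eq K 0 D.marked l.1.val (h2 ▸ k.1.2), if_neg (by simpa using l.2)]
    simp [h2]
  · rfl

theorem SourceDiagram.complex_eq (D : Γ.SourceDiagram) :
    D.complex K = listComplex K D.marked := by
  have h : D.diff K = listDiff K D.marked := by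
    have : (fun k l => D.entry K k l) =
        fun (k : D.Src) (l : D.Snk) => listEntry K D.marked k.1.val l.1.val :=
      funext fun k => funext fun l => D.entry_eq K k l
    unfold listDiff
    rw [← this]
    rfl
  unfold SourceDiagram.complex listComplex
  rw [h]

theorem isEmpty_listSnk_singleton (d : Γ.Dart) : IsEmpty (ListSnk [d]) :=
  ⟨fun l => l.2 (by
    obtain ⟨⟨l, hl⟩, -⟩ := l
    obtain rfl : l = 0 := by simpa using hl
    exact Even.zero)⟩

/-- A sequence of one term has one source. -/
abbrev uniqueListSrcSingleton (d : Γ.Dart) : Unique (ListSrc [d]) where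
  default := ⟨⟨0, Nat.zero_lt_one⟩, Even.zero⟩
  uniq := fun k => by
    obtain ⟨⟨k, hk⟩, -⟩ := k
    obtain rfl : k = 0 := by simpa using hk
    rfl

/-- The source term of the complex of a sequence of one term. -/
noncomputable def listSrcSingletonEquiv (d : Γ.Dart) :
    ((k : ListSrc [d]) → Γ.proj K (Γ.edge [d][k.1])) ≃ₗ[Γ.Alg K] Γ.proj K (Γ.edge d) :=
  { @Equiv.piUnique (ListSrc [d]) (uniqueListSrcSingleton d)
      (fun k => Γ.proj K (Γ.edge [d][k.1])) with
    map_add' := fun _ _ => rfl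
    map_smul' := fun _ _ => rfl }

/-- The complex of a sequence of one term is a stalk complex. -/
noncomputable def listComplexIsoStalk (d : Γ.Dart) : listComplex K [d] ≅ stalk K (Γ.edge d) :=
  doubleIsoSingle (ModuleCat.ofHom (listDiff K [d])) _
    (have := isEmpty_listSnk_singleton d; ModuleCat.isZero_of_subsingleton _)
    (listSrcSingletonEquiv K d).toModuleIso

/-! ### Morphisms -/

theorem listEntry_mul_idem {L : List Γ.Dart} (hL : Γ.IsLinked L) (k : ℕ) (hk : Even k)
    (l : ListSnk L) : listEntry K L k l.1.val * Γ.idem K (Γ.edge L[l.1]) =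
      listEntry K L k l.1.val := by
  obtain ⟨⟨l, hlt⟩, hl⟩ := l
  have hchain := List.isChain_iff_getElem.1 hL
  simp only [listEntry, Fin.getElem_fin]
  split_ifs with h1 h2
  · subst h1
    rw [link_eq K 0 L k hlt, if_pos (by simpa using hk)]
    exact Γ.arc_mul_idem K (hchain k hlt).1
  · subst h2
    by_cases hlt' : l + 1 < L.length
    · rw [link_eq K 0 L l hlt', if_neg (by simpa using hl), ← edge_symm]
      exact Γ.arc_mul_idem K (hchain l hlt').1.symm
    · rw [link_eq_zero K 0 L l (not_lt.1 hlt'), zero_mul]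
  · rw [zero_mul]

theorem sum_eq_of_eq_zero {n : ℕ} {P : ℕ → Prop} [DecidablePred P] {R : Type*}
    [AddCommMonoid R] (F : ℕ → R) (l : ℕ) (hl : P l) (h : n ≤ l → F l = 0) :
    ∑ m : {m : Fin n // P m.val}, (if m.1.val = l then F m.1.val else 0) = F l := by
  by_cases hn : l < n
  · rw [Fintype.sum_eq_single ⟨⟨l, hn⟩, hl⟩, if_pos rfl]
    intro m hm
    rw [if_neg]
    intro h
    exact hm (Subtype.ext (Fin.ext h))
  · rw [h (not_lt.1 hn)]
    exact Finset.sum_eq_zero fun m _ => if_neg fun (h : m.1.val = l) => hn (h ▸ m.1.2)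

/-- The component in degree `0` of the morphism between the complexes of two sequences. -/
noncomputable def listMapSrc (L L' : List Γ.Dart) :
    ((k : ListSrc L) → Γ.proj K (Γ.edge L[k.1])) →ₗ[Γ.Alg K]
      ((k : ListSrc L') → Γ.proj K (Γ.edge L'[k.1])) :=
  matMap K _ _ fun k m => if k.1.val = m.1.val then coef K L L' k.1.val else 0

/-- The component in degree `1` of the morphism between the complexes of two sequences. -/
noncomputable def listMapSnk (L L' : List Γ.Dart) :
    ((k : ListSnk L) → Γ.proj K (Γ.edge L[k.1])) →ₗ[Γ.Alg K]
      ((k : ListSnk L') → Γ.proj K (Γ.edge L'[k.1])) :=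
  matMap K _ _ fun k m => if k.1.val = m.1.val then coef K L L' k.1.val else 0

theorem coef_entry_mul_idem (x : V) (L L' : List Γ.Dart) (hL : Γ.IsLinked L)
    (hL' : Γ.IsLinked L') (hx : Γ.HeadAt x L) (hx' : Γ.HeadAt x L') (k : ℕ) (m : Fin L'.length) :
    (if k = m.val then coef K L L' k else 0) * Γ.idem K (Γ.edge L'[m]) =
      if k = m.val then coef K L L' k else 0 := by
  split_ifs with h
  · subst h
    exact coef_mul_idem K x L L' hL hL' hx hx' m.val m.2
  · rw [zero_mul]

theorem listDiff_comp_listMap (g : Γ.Dart) (L L' : List Γ.Dart) (hL : Γ.IsLinked L)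
    (hL' : Γ.IsLinked L') (hg : Γ.HeadAt g.fst L) (hg' : Γ.HeadAt g.fst L')
    (hlt : Γ.lexLt 1 g L' L) (hne : L ≠ []) (hne' : L' ≠ []) :
    (listMapSnk K L L').comp (listDiff K L) = (listDiff K L').comp (listMapSrc K L L') := by
  unfold listMapSnk listDiff listMapSrc
  rw [matMap_comp K _ _ _ _ _ fun k l => listEntry_mul_idem K hL _ k.2 l,
    matMap_comp K _ _ _ _ _ fun k l =>
      coef_entry_mul_idem K g.fst L L' hL hL' hg hg' k.1.val l.1]
  congr 1
  funext k l
  simp only [mul_ite, mul_zero, ite_mul, zero_mul]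
  rw [sum_eq_of_eq_zero (P := fun n => ¬ Even n)
    (fun m => listEntry K L k.1.val m * coef K L L' m) l.1.val l.2
    (fun h => by rw [coef_eq_zero_left K L L' _ h, mul_zero])]
  have h0 := sum_eq_of_eq_zero (n := L'.length) (P := Even)
    (fun m => coef K L L' m * listEntry K L' m l.1.val) k.1.val k.2
    (fun h => by rw [coef_eq_zero_right K L L' _ h, zero_mul])
  refine Eq.trans ?_ (h0.symm.trans (Finset.sum_congr rfl fun m _ => ?_))
  · have key := link_mul_coef K 0 g L L' hL hL' hg hg' hlt hne hne'
    simp only [listEntry]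
    split_ifs with h1 h2
    · rw [h1]
      exact (key k.1.val).1 (by simpa using k.2)
    · rw [h2]
      exact (key l.1.val).2 (by simpa using l.2)
    · rw [zero_mul, mul_zero]
  · by_cases h : m.1.val = k.1.val
    · rw [if_pos h, if_pos h.symm, h]
    · rw [if_neg h, if_neg (Ne.symm h)]

/-- The morphism between the complexes of two comparable sequences. -/
noncomputable def listMap (g : Γ.Dart) (L L' : List Γ.Dart) (hL : Γ.IsLinked L)
    (hL' : Γ.IsLinked L') (hg : Γ.HeadAt g.fst L) (hg' : Γ.HeadAt g.fst L')
    (hlt : Γ.lexLt 1 g L' L) (hne : L ≠ []) (hne' : L' ≠ []) :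
    listComplex K L ⟶ listComplex K L' :=
  doubleMap (zero_add 1) (ModuleCat.ofHom (listMapSrc K L L')) (ModuleCat.ofHom (listMapSnk K L L'))
    (by
      rw [← ModuleCat.ofHom_comp, ← ModuleCat.ofHom_comp,
        listDiff_comp_listMap K g L L' hL hL' hg hg' hlt hne hne'])

theorem exists_listDiff_single (a : Γ.Dart) (L : List Γ.Dart) (hL : Γ.IsLinked (a :: L))
    (s : (k : ListSrc (a :: L)) → Γ.proj K (Γ.edge (a :: L)[k.1]))
    (hs : ∀ k, (s k : Γ.Alg K) = if k.1.val = 0 then Γ.idem K (Γ.edge a) else 0) :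
    ∃ t, listDiff K (a :: L) s = link K 0 (a :: L) 0 • t := by
  have hmem : ∀ l : ListSnk (a :: L), (if l.1.val = 1 then Γ.idem K (Γ.edge (a :: L)[l.1]) else 0) ∈
      Γ.proj K (Γ.edge (a :: L)[l.1]) := fun l => by
    split_ifs
    · exact idem_mem_proj K _
    · exact zero_mem _
  refine ⟨fun l => ⟨_, hmem l⟩, funext fun l => Subtype.ext ?_⟩
  have hlink : Γ.idem K (Γ.edge a) * link K 0 (a :: L) 0 = link K 0 (a :: L) 0 := by
    cases L with
    | nil => simp [link]
    | cons b L =>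
      rw [link, if_pos Even.zero, ← edge_symm, idem_mul_arc]
  have h0 : listEntry K (a :: L) 0 l.1.val = if l.1.val = 1 then link K 0 (a :: L) 0 else 0 := by
    rw [listEntry, zero_add, if_neg (c := 0 = l.1.val + 1) (Nat.succ_ne_zero _).symm]
  rw [listDiff, coe_matMap,
    Fintype.sum_eq_single (⟨⟨0, Nat.succ_pos _⟩, Even.zero⟩ : ListSrc (a :: L))]
  · rw [hs, if_pos rfl, ← mul_assoc]
    change Γ.idem K (Γ.edge a) * listEntry K (a :: L) 0 l.1.val * _ =
      link K 0 (a :: L) 0 * (if l.1.val = 1 then _ else 0)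
    rw [h0]
    split_ifs
    · rw [hlink]
    · rw [mul_zero, zero_mul, mul_zero]
  · intro k hk
    rw [hs, if_neg, zero_mul]
    exact fun h => hk (Subtype.ext (Fin.ext h))

/-- The composition of two such morphisms is not null-homotopic. -/
theorem quotient_map_listMap_comp_ne_zero (g : Γ.Dart) (L L' L'' : List Γ.Dart)
    (hL : Γ.IsLinked L) (hL' : Γ.IsLinked L') (hL'' : Γ.IsLinked L'')
    (hg : Γ.HeadAt g.fst L) (hg' : Γ.HeadAt g.fst L') (hg'' : Γ.HeadAt g.fst L'')
    (hlt : Γ.lexLt 1 g L' L) (hlt' : Γ.lexLt 1 g L'' L')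
    (hne : L ≠ []) (hne' : L' ≠ []) (hne'' : L'' ≠ []) :
    (HomotopyCategory.quotient _ _).map (listMap K g L L' hL hL' hg hg' hlt hne hne' ≫
      listMap K g L' L'' hL' hL'' hg' hg'' hlt' hne' hne'') ≠ 0 := by
  intro h
  obtain ⟨H, hH⟩ := exists_factor_of_quotient_map_eq_zero _ _ _ h
  rw [← ModuleCat.ofHom_comp] at hH
  replace hH : (listMapSrc K L' L'').comp (listMapSrc K L L') = H.hom.comp (listDiff K L) :=
    congrArg ModuleCat.Hom.hom hH
  obtain ⟨a, L, rfl⟩ := List.exists_cons_of_ne_nil hne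
  obtain ⟨b, L', rfl⟩ := List.exists_cons_of_ne_nil hne'
  obtain ⟨c, L'', rfl⟩ := List.exists_cons_of_ne_nil hne''
  have hab : a.fst = b.fst := hg.fst_eq.trans hg'.fst_eq.symm
  have hac : a.fst = c.fst := hg.fst_eq.trans hg''.fst_eq.symm
  have hsteps : Γ.steps a b + Γ.steps b c = Γ.steps a c := by
    have h1 := steps_head_le_of_lexLt hlt
    have h2 := steps_head_le_of_lexLt hlt'
    have h3 := Γ.steps_add_of_le hg.fst_eq.symm hg'.fst_eq.symm h1
    have h4 := Γ.steps_add_of_le hg'.fst_eq.symm hg''.fst_eq.symm h2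
    have h5 := Γ.steps_add_of_le hg.fst_eq.symm hg''.fst_eq.symm (h1.trans h2)
    omega
  have hmem : ∀ k : ListSrc (a :: L), (if k.1.val = 0 then Γ.idem K (Γ.edge a) else 0) ∈
      Γ.proj K (Γ.edge (a :: L)[k.1]) := fun k => by
    split_ifs with hk
    · obtain ⟨⟨k, hlt⟩, hk'⟩ := k
      obtain rfl : k = 0 := hk
      exact idem_mem_proj K _
    · exact zero_mem _
  let s : (k : ListSrc (a :: L)) → Γ.proj K (Γ.edge (a :: L)[k.1]) := fun k => ⟨_, hmem k⟩
  obtain ⟨t, ht⟩ := exists_listDiff_single K a L hL s fun _ => rfl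
  have hv : (((listMapSrc K (b :: L') (c :: L'')).comp (listMapSrc K (a :: L) (b :: L'))) s
      ⟨⟨0, Nat.succ_pos _⟩, Even.zero⟩ : Γ.Alg K) = Γ.arc K a c := by
    rw [LinearMap.comp_apply, listMapSrc, coe_matMap,
      Fintype.sum_eq_single (⟨⟨0, Nat.succ_pos _⟩, Even.zero⟩ : ListSrc (b :: L')), listMapSrc,
      coe_matMap, Fintype.sum_eq_single (⟨⟨0, Nat.succ_pos _⟩, Even.zero⟩ : ListSrc (a :: L))]
    · change Γ.idem K (Γ.edge a) * (Γ.arc K a b * Γ.idem K (Γ.edge b)) *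
        (Γ.arc K b c * Γ.idem K (Γ.edge c)) = _
      rw [Γ.arc_mul_idem K hab, idem_mul_arc, Γ.arc_mul_idem K (hab.symm.trans hac),
        Γ.arc_mul_arc K hab hsteps]
    · intro k hk
      rw [show (s k : Γ.Alg K) = 0 from if_neg fun h => hk (Subtype.ext (Fin.ext h)), zero_mul]
    · intro k hk
      rw [if_neg fun h => hk (Subtype.ext (Fin.ext h)), zero_mul, mul_zero]
  rw [hH, LinearMap.comp_apply, ht, map_smul] at hv
  obtain ⟨n, _, _, ρ, h0, h1⟩ := Γ.exists_uniserial K a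
  refine h1 (Γ.steps a c) (Γ.steps_lt_valency hac) ?_
  rw [← arc_eq_path, ← hv]
  have hlink : ρ (link K 0 (a :: L) 0) = 0 := by
    cases L with
    | nil => simp [link]
    | cons d L =>
      have hd := (List.isChain_cons_cons.1 hL).1
      rw [link, if_pos Even.zero, arc_eq_path]
      refine h0 _ (Γ.steps_pos (d := a.symm) hd.1 fun h => hd.2 ?_)
      rw [← h, edge_symm]
  refine (map_mul ρ _ _).trans ?_
  rw [hlink, zero_mul]

end Complexes

end BrauerTree

section Glued

theorem gluedNext_unique {α : Type*} {lt : α → α → Prop} [IsStrictTotalOrder α lt] {a b c : α}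
    (hb : GluedNext lt a b) (hc : GluedNext lt a c) : b = c := by
  have hirr : ∀ x, ¬ lt x x := irrefl_of lt
  have hasymm : ∀ x y, lt x y → ¬ lt y x := fun x y h h' => hirr x (trans_of lt h h')
  rcases hb with ⟨hb, hb'⟩ | ⟨hb, hb'⟩ <;> rcases hc with ⟨hc, hc'⟩ | ⟨hc, hc'⟩
  · rcases hb' c hc with h | h
    · exact h.symm
    · rcases hc' b hb with h' | h'
      · exact h'
      · exact absurd h' (hasymm _ _ h)
  · rcases hc b with h | h
    · exact absurd (h ▸ hb) (hirr _)
    · exact absurd hb (hasymm _ _ h)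
  · rcases hb c with h | h
    · exact absurd (h ▸ hc) (hirr _)
    · exact absurd hc (hasymm _ _ h)
  · rcases hb' c with h | h
    · exact h.symm
    · rcases hc' b with h' | h'
      · exact h'
      · exact absurd h' (hasymm _ _ h)

end Glued

namespace BrauerTree

section Rotation

variable {V : Type v} (Γ : BrauerTree V) {y : V}

/-- A linear order on the edges at a vertex such that every descending triple is passed in this
order along the cycle determines the cyclic ordering. -/
theorem rot_iff_gluedNext {lt : {e : Γ.Edge // y ∈ (e : Sym2 V)} →
      {e : Γ.Edge // y ∈ (e : Sym2 V)} → Prop} [IsStrictTotalOrder _ lt]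
    (hlt : ∀ (e₁ e₂ e₃ : {e : Γ.Edge // y ∈ (e : Sym2 V)}) (d₁ d₂ d₃ : Γ.Dart),
      d₁.fst = y → d₂.fst = y → d₃.fst = y →
      Γ.edge d₁ = e₁ → Γ.edge d₂ = e₂ → Γ.edge d₃ = e₃ → lt e₂ e₁ → lt e₃ e₂ →
      Γ.steps d₁ d₂ + Γ.steps d₂ d₃ = Γ.steps d₁ d₃)
    (e f : {e : Γ.Edge // y ∈ (e : Sym2 V)}) :
    (∃ d : Γ.Dart, d.fst = y ∧ Γ.edge d = e.1 ∧ Γ.edge (Γ.rot d) = f.1) ↔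
      GluedNext lt e f := by
  have hirr : ∀ x, ¬ lt x x := irrefl_of lt
  have key : ∀ e f : {e : Γ.Edge // y ∈ (e : Sym2 V)},
      (∃ d : Γ.Dart, d.fst = y ∧ Γ.edge d = e.1 ∧ Γ.edge (Γ.rot d) = f.1) →
        GluedNext lt e f := by
    rintro e f ⟨d, rfl, hde, hdf⟩
    have hr : (Γ.rot d).fst = d.fst := Γ.rot_fst d
    rcases eq_or_ne (Γ.rot d) d with hfix | hfix
    · have hall : ∀ c, c = e := by
        intro c
        obtain ⟨dc, hdc, hc⟩ := Γ.exists_dart c.2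
        obtain ⟨k, hk⟩ := Γ.exists_iterate_rot hdc.symm
        rw [Function.iterate_fixed hfix] at hk
        exact Subtype.ext (by rw [← hc, ← hk, hde])
      exact Or.inr ⟨fun c => Or.inl (hall c), fun c => Or.inl ((hall c).trans (hall f).symm)⟩
    have hsum := Γ.steps_add_steps_swap hr.symm hfix.symm
    have hone : Γ.steps d (Γ.rot d) = 1 := by
      refine le_antisymm (Γ.steps_le rfl) (Γ.steps_pos hr.symm hfix.symm)
    have hfe : f ≠ e := fun h => hfix (Γ.eq_of_edge_eq (by rw [hdf, hde, h]) hr)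
    have hpos : ∀ (c c' : {e : Γ.Edge // d.fst ∈ (e : Sym2 V)}) (d₁ d₂ : Γ.Dart),
        d₁.fst = d.fst → d₂.fst = d.fst → Γ.edge d₁ = c → Γ.edge d₂ = c' → lt c c' ∨ lt c' c →
        0 < Γ.steps d₁ d₂ ∧ Γ.steps d₁ d₂ < Γ.valency d.fst := by
      intro c c' d₁ d₂ h₁ h₂ hc hc' hcc
      refine ⟨Γ.steps_pos (h₁.trans h₂.symm) ?_, h₁ ▸ Γ.steps_lt_valency (h₁.trans h₂.symm)⟩
      rintro rfl
      obtain rfl : c = c' := Subtype.ext (hc.symm.trans hc')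
      rcases hcc with h | h <;> exact hirr _ h
    rcases trichotomous_of lt f e with h | h | h
    · refine Or.inl ⟨h, fun c hc => ?_⟩
      rcases trichotomous_of lt c f with h' | h' | h'
      · exact Or.inr h'
      · exact Or.inl h'
      · obtain ⟨dc, hdc, hce⟩ := Γ.exists_dart c.2
        have := hlt e c f d dc _ rfl hdc hr hde hce hdf hc h'
        have h1 := hpos e c d dc rfl hdc hde hce (Or.inr hc)
        have h2 := hpos c f dc _ hdc hr hce hdf (Or.inr h')
        omega
    · exact absurd h hfe
    · refine Or.inr ⟨fun c => ?_, fun c => ?_⟩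
      · rcases trichotomous_of lt c e with h' | h' | h'
        · obtain ⟨dc, hdc, hce⟩ := Γ.exists_dart c.2
          have := hlt f e c _ d dc hr rfl hdc hdf hde hce h h'
          have h1 := hpos e c d dc rfl hdc hde hce (Or.inr h')
          have h2 := hpos f c _ dc hr hdc hdf hce (Or.inr (trans_of lt h' h))
          omega
        · exact Or.inl h'
        · exact Or.inr h'
      · rcases trichotomous_of lt c f with h' | h' | h'
        · exact Or.inr h'
        · exact Or.inl h'
        · obtain ⟨dc, hdc, hce⟩ := Γ.exists_dart c.2
          have := hlt c f e dc _ d hdc hr rfl hce hdf hde h' h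
          have h1 := hpos c f dc _ hdc hr hce hdf (Or.inr h')
          have h2 := hpos c e dc d hdc rfl hce hde (Or.inr (trans_of lt h h'))
          omega
  refine ⟨key e f, fun h => ?_⟩
  obtain ⟨d, hd, hde⟩ := Γ.exists_dart e.2
  have hmem : y ∈ (Γ.edge (Γ.rot d) : Sym2 V) := by
    have := Γ.fst_mem_edge (Γ.rot d)
    rwa [Γ.rot_fst, hd] at this
  have h' := key e ⟨_, hmem⟩ ⟨d, hd, hde, rfl⟩
  exact ⟨d, hd, hde, by rw [gluedNext_unique h h']⟩

end Rotation

section Summands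

variable {V : Type v} {Γ : BrauerTree V} {K : Type u} [Field K] {T : Γ.Cplx K}
  {V' : Type w} {Γ' : BrauerTree V'} {φ : EndAlg T ≃ₐ[K] Γ'.Alg K}

theorem SummandAt.of_iso {e : Γ'.Edge} {X Y : Γ.Cplx K} (h : SummandAt φ e X) (f : X ≅ Y) :
    SummandAt φ e Y := by
  obtain ⟨i, p, h1, h2⟩ := h
  let F : toHo X ≅ toHo Y := (HomotopyCategory.quotient _ _).mapIso f
  refine ⟨F.inv ≫ i, p ≫ F.hom, ?_, ?_⟩
  · rw [Category.assoc, ← Category.assoc i, h1, Category.id_comp, F.inv_hom_id]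
  · rw [Category.assoc, ← Category.assoc F.hom, F.hom_inv_id, Category.id_comp, h2]

theorem SourceDiagram.headAt (D : Γ.SourceDiagram) {x : V} (h : D.StartsAt x) :
    Γ.HeadAt x D.marked := by
  obtain ⟨L, h2, hchain, hself⟩ := D
  match L, h2 with
  | a :: b :: L, h2 =>
    intro d hd
    obtain rfl : a = d := by simpa using hd
    obtain ⟨hx, hother⟩ := h
    have hab := (List.isChain_cons_cons.1 hchain).1
    by_contra hne
    have hxa : x = b.fst := by
      rw [← hab.1]
      rcases Sym2.mem_iff.1 hx with h | h
      · exact absurd h.symm hne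
      · exact h
    refine hab.2 (hother (Γ.edge b) ⟨0, h2, ?_⟩ (hxa ▸ Γ.fst_mem_edge b)).symm
    rw [stringVertices, if_pos Even.zero]
    exact ⟨_, le_rfl, congrArg Γ.edge (Γ.iterate_steps (d := a.symm) hab.1).symm⟩

theorem SourceSummand.summandAt_listComplex {x : V} {e : Γ'.Edge} {L : List Γ.Dart}
    (h : SourceSummand φ x e L) :
    Γ.IsLinked L ∧ Γ.HeadAt x L ∧ L ≠ [] ∧ SummandAt φ e (listComplex K L) := by
  rcases h with ⟨d, hd, rfl, hs⟩ | ⟨D, hD, rfl, hs⟩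
  · refine ⟨List.isChain_singleton _, ?_, List.cons_ne_nil _ _,
      hs.of_iso (listComplexIsoStalk K d).symm⟩
    intro d' hd'
    obtain rfl : d = d' := by simpa using hd'
    exact hd
  · refine ⟨D.chain, D.headAt hD, ?_, D.complex_eq K ▸ hs⟩
    rintro h
    have := D.two_le
    rw [h] at this
    exact absurd this (by simp)

theorem map_op_mul_map_op (u w : End (toHo T)) : φ (MulOpposite.op u) * φ (MulOpposite.op w) =
    φ (MulOpposite.op (show End (toHo T) from u ≫ w)) := by
  rw [← map_mul]
  rfl

theorem idem_eq_map_op {e : Γ'.Edge} {u : End (toHo T)} (h : u = (φ.symm (Γ'.idem K e)).unop) :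
    Γ'.idem K e = φ (MulOpposite.op u) := by
  rw [h, MulOpposite.op_unop, φ.apply_symm_apply]

/-- Composable morphisms between summands give elements of the Brauer tree algebra whose product
vanishes only if the composition does. -/
theorem SummandAt.exists_elements {e₁ e₂ e₃ : Γ'.Edge} {X₁ X₂ X₃ : Γ.Cplx K}
    (h₁ : SummandAt φ e₁ X₁) (h₂ : SummandAt φ e₂ X₂) (h₃ : SummandAt φ e₃ X₃)
    (a : toHo X₁ ⟶ toHo X₂) (b : toHo X₂ ⟶ toHo X₃) :
    ∃ s t : Γ'.Alg K, Γ'.idem K e₁ * s * Γ'.idem K e₂ = s ∧ Γ'.idem K e₂ * t * Γ'.idem K e₃ = t ∧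
      (s * t = 0 → a ≫ b = 0) := by
  obtain ⟨i₁, p₁, h₁, h₁'⟩ := h₁
  obtain ⟨i₂, p₂, h₂, h₂'⟩ := h₂
  obtain ⟨i₃, p₃, h₃, h₃'⟩ := h₃
  refine ⟨φ (MulOpposite.op (show End (toHo T) from p₁ ≫ a ≫ i₂)),
    φ (MulOpposite.op (show End (toHo T) from p₂ ≫ b ≫ i₃)), ?_, ?_, fun h0 => ?_⟩
  · rw [idem_eq_map_op h₁', idem_eq_map_op h₂', map_op_mul_map_op, map_op_mul_map_op]
    congr 2
    change ((p₁ ≫ i₁) ≫ p₁ ≫ a ≫ i₂) ≫ p₂ ≫ i₂ = p₁ ≫ a ≫ i₂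
    simp only [Category.assoc]
    rw [← Category.assoc i₁, h₁, Category.id_comp, ← Category.assoc i₂, h₂, Category.id_comp]
  · rw [idem_eq_map_op h₂', idem_eq_map_op h₃', map_op_mul_map_op, map_op_mul_map_op]
    congr 2
    change ((p₂ ≫ i₂) ≫ p₂ ≫ b ≫ i₃) ≫ p₃ ≫ i₃ = p₂ ≫ b ≫ i₃
    simp only [Category.assoc]
    rw [← Category.assoc i₂, h₂, Category.id_comp, ← Category.assoc i₃, h₃, Category.id_comp]
  · rw [map_op_mul_map_op, map_eq_zero_iff φ φ.injective, MulOpposite.op_eq_zero_iff] at h0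
    replace h0 : (p₁ ≫ a ≫ i₂) ≫ p₂ ≫ b ≫ i₃ = 0 := h0
    have h : a ≫ b = i₁ ≫ ((p₁ ≫ a ≫ i₂) ≫ p₂ ≫ b ≫ i₃) ≫ p₃ := by
      simp only [Category.assoc]
      rw [h₃, Category.comp_id, ← Category.assoc i₂, h₂, Category.id_comp, ← Category.assoc i₁,
        h₁, Category.id_comp]
    rw [h, h0, Limits.zero_comp, Limits.comp_zero]

/-- Summands of different edges are not isomorphic. -/
theorem SummandAt.edge_unique {e f : Γ'.Edge} {X : Γ.Cplx K} (he : SummandAt φ e X)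
    (hf : SummandAt φ f X) : e = f := by
  by_contra hne
  obtain ⟨i, p, h1, h2⟩ := he
  obtain ⟨j, q, h3, h4⟩ := hf
  refine Γ'.idem_ne_mul_of_ne K hne (s := φ (MulOpposite.op (show End (toHo T) from p ≫ j)))
    (t := φ (MulOpposite.op (show End (toHo T) from q ≫ i))) ?_ ?_
  · rw [idem_eq_map_op h4, map_op_mul_map_op]
    congr 2
    change (p ≫ j) ≫ q ≫ j = p ≫ j
    rw [Category.assoc, ← Category.assoc j, h3, Category.id_comp]
  · rw [idem_eq_map_op h2, map_op_mul_map_op]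
    congr 2
    change p ≫ i = (p ≫ j) ≫ q ≫ i
    rw [Category.assoc, ← Category.assoc j, h3, Category.id_comp]

end Summands

end BrauerTree

theorem cyclic_order_at_source_cycle
    {K : Type u} [Field K] [IsAlgClosed K] {V : Type v} (Γ : BrauerTree V)
    (T : Γ.Cplx K) (hT : BrauerTree.IsTwoTerm T) (htilt : BrauerTree.IsTilting T)
    (hbasic : BrauerTree.IsBasic T)
    -- the Brauer tree `Γ'` of the endomorphism algebra of `T`
    {V' : Type w} (Γ' : BrauerTree V') (φ : BrauerTree.EndAlg T ≃ₐ[K] Γ'.Alg K)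
    -- the vertex `y` of `Γ'` is the cycle corresponding to the sources on the cycle `x` of `A`
    (x : V) (y : V') (hy : BrauerTree.IsSourceCycle φ x y)
    -- the ordered sets of vertices associated to the summands
    (L : {e : Γ'.Edge // y ∈ (e : Sym2 V')} → List Γ.Dart)
    (hL : ∀ e, BrauerTree.SourceSummand φ x e.1 (L e))
    -- the vertex on the cycle `x` which is fixed as the greatest one
    (g : Γ.Dart) (hg : g.fst = x) :
    IsStrictTotalOrder {e : Γ'.Edge // y ∈ (e : Sym2 V')}
      (fun e f => Γ.lexLt 1 g (L e) (L f)) ∧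
    ∀ e f : {e : Γ'.Edge // y ∈ (e : Sym2 V')},
      (∃ d : Γ'.Dart, d.fst = y ∧ Γ'.edge d = e.1 ∧ Γ'.edge (Γ'.rot d) = f.1) ↔
        GluedNext (fun e f => Γ.lexLt 1 g (L e) (L f)) e f := by
  subst hg
  choose hlink hhead hne hsum using fun e => (hL e).summandAt_listComplex
  have hord : IsStrictTotalOrder {e : Γ'.Edge // y ∈ (e : Sym2 V')}
      (fun e f => Γ.lexLt 1 g (L e) (L f)) :=
    { trichotomous := fun e f h h' => by
        rcases BrauerTree.lexLt_trichotomous 1 g (L e) (L f) (hlink e) (hlink f) (hhead e)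
          (hhead f) with h'' | h'' | h''
        · exact absurd h'' h
        · exact Subtype.ext ((hsum e).edge_unique (h'' ▸ hsum f))
        · exact absurd h'' h'
      irrefl := fun e => BrauerTree.lexLt_irrefl 1 g (L e)
      trans := fun e f h => BrauerTree.lexLt_trans 1 g (L e) (L f) (L h) }
  refine ⟨hord, Γ'.rot_iff_gluedNext ?_⟩
  intro e₁ e₂ e₃ d₁ d₂ d₃ h₁ h₂ h₃ he₁ he₂ he₃ h₂₁ h₃₂
  have hdart : ∀ (e f : {e : Γ'.Edge // y ∈ (e : Sym2 V')}) (d d' : Γ'.Dart),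
      Γ'.edge d = e → Γ'.edge d' = f → Γ.lexLt 1 g (L f) (L e) → d ≠ d' := by
    rintro e f d _ he hf hlt rfl
    obtain rfl : e = f := Subtype.ext (he.symm.trans hf)
    exact BrauerTree.lexLt_irrefl _ _ _ hlt
  obtain ⟨s, t, hs, ht, hst⟩ := (hsum e₁).exists_elements (hsum e₂) (hsum e₃)
    ((HomotopyCategory.quotient _ _).map (BrauerTree.listMap K g _ _ (hlink e₁) (hlink e₂)
      (hhead e₁) (hhead e₂) h₂₁ (hne e₁) (hne e₂)))
    ((HomotopyCategory.quotient _ _).map (BrauerTree.listMap K g _ _ (hlink e₂) (hlink e₃)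
      (hhead e₂) (hhead e₃) h₃₂ (hne e₂) (hne e₃)))
  refine Γ'.steps_add_of_mul_ne_zero K (h₁.trans h₂.symm) (h₂.trans h₃.symm)
    (hdart _ _ _ _ he₁ he₂ h₂₁) (hdart _ _ _ _ he₂ he₃ h₃₂)
    (hdart _ _ _ _ he₁ he₃ (BrauerTree.lexLt_trans _ _ _ _ _ h₃₂ h₂₁)) s t fun h0 => ?_
  rw [he₁, he₂, he₃, hs, ht] at h0
  refine BrauerTree.quotient_map_listMap_comp_ne_zero K g _ _ _ (hlink e₁) (hlink e₂) (hlink e₃)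
    (hhead e₁) (hhead e₂) (hhead e₃) h₂₁ h₃₂ (hne e₁) (hne e₂) (hne e₃) ?_
  rw [Functor.map_comp]
  exact hst h0
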